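/- arXiv:1209.4945 — 3 statements merged into one kernel-verified Lean document; each statement's English description precedes it below -/
import Mathlib

section
/- Let t₁, t₂ ≥ 0 with t₁ + t₂ = 1. The measure ρ_{t₁,t₂} on Gr²(V) is quasi-invariant under the componentwise action of GLB × GLB, with cocycle: for every (g,h) ∈ GLB × GLB and every measurable set A ⊆ Gr²(V), ρ_{t₁,t₂}((g,h)·A) = ∫_A q^{Σ_k k·(Sym(X)_k − Sym(gX)_k) + Σ_k k·(Sym(Y)_k − Sym(hY)_k)} ρ_{t₁,t₂}(d(X,Y)), both sums having only finitely many nonzero terms. (Corollary 5.10.) -/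
open MeasureTheory

variable (F : Type) [Field F] [Fintype F] [DecidableEq F]

/-- `V = ⊕_{i≥0} F`: the `F`-vector space of finitely supported sequences. -/
abbrev Vinf := ℕ →₀ F

/-- `V_n`: the span of the first `n` standard basis vectors of `V`. -/
def Vn (n : ℕ) : Submodule F (Vinf F) where
  carrier := {v | ∀ i : ℕ, n ≤ i → v i = 0}
  add_mem' := by
    intro a b ha hb i hi
    simp [Finsupp.add_apply, ha i hi, hb i hi]
  zero_mem' := by
    intro i hi
    simp
  smul_mem' := by
    intro c v hv i hi
    simp [Finsupp.smul_apply, hv i hi]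

/-- The group `GLB` of `F`-linear automorphisms `g` of `V` with `g(V_n) = V_n` for all
sufficiently large `n`. -/
def GLBgrp : Subgroup ((Vinf F) ≃ₗ[F] (Vinf F)) where
  carrier := {g | ∃ N : ℕ, ∀ n : ℕ, N ≤ n →
    Submodule.map (g : (Vinf F) →ₗ[F] (Vinf F)) (Vn F n) = Vn F n}
  one_mem' := by
    refine ⟨0, fun n _ => ?_⟩
    have h1 : ((1 : (Vinf F) ≃ₗ[F] (Vinf F)) : (Vinf F) →ₗ[F] (Vinf F)) = LinearMap.id := by
      ext x; rfl
    rw [h1, Submodule.map_id]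
  mul_mem' := by
    rintro g h ⟨Ng, hg⟩ ⟨Nh, hh⟩
    refine ⟨max Ng Nh, fun n hn => ?_⟩
    have h1 : ((g * h : (Vinf F) ≃ₗ[F] (Vinf F)) : (Vinf F) →ₗ[F] (Vinf F))
        = ((g : (Vinf F) →ₗ[F] (Vinf F)).comp (h : (Vinf F) →ₗ[F] (Vinf F))) := by
      ext x; rfl
    rw [h1, Submodule.map_comp, hh n (le_trans (le_max_right _ _) hn),
      hg n (le_trans (le_max_left _ _) hn)]
  inv_mem' := by
    rintro g ⟨N, hg⟩
    refine ⟨N, fun n hn => ?_⟩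
    conv_lhs => rw [← hg n hn]
    rw [← Submodule.map_comp]
    have h1 : ((g⁻¹ : (Vinf F) ≃ₗ[F] (Vinf F)) : (Vinf F) →ₗ[F] (Vinf F)).comp
        ((g : (Vinf F) →ₗ[F] (Vinf F))) = LinearMap.id := by
      have h0 : ((g⁻¹ * g : (Vinf F) ≃ₗ[F] (Vinf F)) : (Vinf F) →ₗ[F] (Vinf F))
          = ((g⁻¹ : (Vinf F) ≃ₗ[F] (Vinf F)) : (Vinf F) →ₗ[F] (Vinf F)).comp
            ((g : (Vinf F) →ₗ[F] (Vinf F))) := by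
        ext x; rfl
      rw [← h0, inv_mul_cancel]
      ext x; rfl
    rw [h1, Submodule.map_id]

/-- The Borel subgroup `B ⊆ GLB` of automorphisms with `g(V_n) = V_n` for all `n`. -/
def Bgrp : Subgroup ((Vinf F) ≃ₗ[F] (Vinf F)) where
  carrier := {g | ∀ n : ℕ,
    Submodule.map (g : (Vinf F) →ₗ[F] (Vinf F)) (Vn F n) = Vn F n}
  one_mem' := by
    intro n
    have h1 : ((1 : (Vinf F) ≃ₗ[F] (Vinf F)) : (Vinf F) →ₗ[F] (Vinf F)) = LinearMap.id := by
      ext x; rfl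
    rw [h1, Submodule.map_id]
  mul_mem' := by
    intro g h hg hh n
    have h1 : ((g * h : (Vinf F) ≃ₗ[F] (Vinf F)) : (Vinf F) →ₗ[F] (Vinf F))
        = ((g : (Vinf F) →ₗ[F] (Vinf F)).comp (h : (Vinf F) →ₗ[F] (Vinf F))) := by
      ext x; rfl
    rw [h1, Submodule.map_comp, hh n, hg n]
  inv_mem' := by
    intro g hg n
    conv_lhs => rw [← hg n]
    rw [← Submodule.map_comp]
    have h1 : ((g⁻¹ : (Vinf F) ≃ₗ[F] (Vinf F)) : (Vinf F) →ₗ[F] (Vinf F)).comp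
        ((g : (Vinf F) →ₗ[F] (Vinf F))) = LinearMap.id := by
      have h0 : ((g⁻¹ * g : (Vinf F) ≃ₗ[F] (Vinf F)) : (Vinf F) →ₗ[F] (Vinf F))
          = ((g⁻¹ : (Vinf F) ≃ₗ[F] (Vinf F)) : (Vinf F) →ₗ[F] (Vinf F)).comp
            ((g : (Vinf F) →ₗ[F] (Vinf F))) := by
        ext x; rfl
      rw [← h0, inv_mul_cancel]
      ext x; rfl
    rw [h1, Submodule.map_id]

/-- The Borel σ-algebra of `B` for the topology of pointwise convergence: the σ-algebra
generated by the evaluations `g ↦ g(e_i)` (with the finite set `V` discrete). -/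
noncomputable instance mB : MeasurableSpace ↥(Bgrp F) := by
  letI : MeasurableSpace (Vinf F) := ⊤
  exact MeasurableSpace.comap
    (fun g => fun i : ℕ => ((g : (Vinf F) ≃ₗ[F] (Vinf F)) (Finsupp.single i 1)))
    MeasurableSpace.pi

/-- The increment `Sym(X)_{k+1} = dim(X ∩ V_{k+1}) - dim(X ∩ V_k)` of the symbol of a
subspace `X ⊆ V` (0-based indexing: `symInc X k` is the `(k+1)`-st, 1-based, entry). -/
noncomputable def symInc (X : Submodule F (Vinf F)) (k : ℕ) : ℕ :=
  Module.finrank F ↥(X ⊓ Vn F (k + 1)) - Module.finrank F ↥(X ⊓ Vn F k)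

/-- The coordinate subspace `C(x) = span{e_i : x_i = 1}` of a 0–1 sequence `x`. -/
noncomputable def coordSpan (x : ℕ → Bool) : Submodule F (Vinf F) :=
  Submodule.span F ((fun i : ℕ => Finsupp.single i (1 : F)) '' {i : ℕ | x i = true})

/-- The map `φ : {0,1}^ℕ × B → Gr(V)`, `(x, g) ↦ g·C(x)`. -/
noncomputable def phiMap (p : (ℕ → Bool) × ↥(Bgrp F)) : Submodule F (Vinf F) :=
  Submodule.map ((p.2 : (Vinf F) ≃ₗ[F] (Vinf F)) : (Vinf F) →ₗ[F] (Vinf F)) (coordSpan F p.1)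

/-- The basic set `U^n(X,Y)` of the groupoid `Gr²(V)`: pairs `(Z,W)` of `GLB`-equivalent
subspaces with `Z ∩ V_n = X ∩ V_n`, `W ∩ V_n = Y ∩ V_n` and `dim(Z ∩ V_k) = dim(W ∩ V_k)`
for all `k ≥ n`. -/
def Upair (n : ℕ) (X Y : Submodule F (Vinf F)) :
    Set (Submodule F (Vinf F) × Submodule F (Vinf F)) :=
  {p | (∃ g ∈ GLBgrp F, Submodule.map (g : (Vinf F) →ₗ[F] (Vinf F)) p.1 = p.2) ∧
    p.1 ⊓ Vn F n = X ⊓ Vn F n ∧ p.2 ⊓ Vn F n = Y ⊓ Vn F n ∧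
    ∀ k : ℕ, n ≤ k → Module.finrank F ↥(p.1 ⊓ Vn F k) = Module.finrank F ↥(p.2 ⊓ Vn F k)}

/-- The σ-algebra of the groupoid `Gr²(V)`, generated by the sets `U^n(X,Y)`. -/
noncomputable instance mGr2 :
    MeasurableSpace (Submodule F (Vinf F) × Submodule F (Vinf F)) :=
  MeasurableSpace.generateFrom
    {A | ∃ (n : ℕ) (X Y : Submodule F (Vinf F)), A = Upair F n X Y}

/-- The set `T` of pairs of 0–1 sequences which eventually agree and whose initial segments
have matching numbers of ones. -/
def Tset : Set ((ℕ → Bool) × (ℕ → Bool)) :=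
  {p | ∃ N : ℕ, (∀ k : ℕ, N < k → p.1 k = p.2 k) ∧
    ((Finset.range (N + 1)).filter (fun k => p.1 k = true)).card
      = ((Finset.range (N + 1)).filter (fun k => p.2 k = true)).card}

/-- The basic subset `A(i₁,...,i_n; j₁,...,j_n)` of `T`. -/
def Aset (n : ℕ) (c d : Fin n → Bool) : Set ↥Tset :=
  {p | (∀ k : Fin n, p.1.1 (k : ℕ) = c k ∧ p.1.2 (k : ℕ) = d k) ∧
    ∀ k : ℕ, n ≤ k → p.1.1 k = p.1.2 k}

/-- The σ-algebra of `T`, generated by the sets `A(i₁,...,i_n; j₁,...,j_n)`. -/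
noncomputable instance mT : MeasurableSpace ↥Tset :=
  MeasurableSpace.generateFrom {S | ∃ (n : ℕ) (c d : Fin n → Bool), S = Aset n c d}

/-- The number of ones in a finite 0–1 sequence. -/
def trueCount {n : ℕ} (c : Fin n → Bool) : ℕ :=
  (Finset.univ.filter (fun k => c k = true)).card

/-- The map `ψ : T × B × B → Gr(V) × Gr(V)`, `ψ((x,y),g,h) = (g·C(x), h·C(y))`. -/
noncomputable def psiMap (w : ↥Tset × (↥(Bgrp F) × ↥(Bgrp F))) :
    Submodule F (Vinf F) × Submodule F (Vinf F) :=
  (Submodule.map ((w.2.1 : (Vinf F) ≃ₗ[F] (Vinf F)) : (Vinf F) →ₗ[F] (Vinf F))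
      (coordSpan F w.1.1.1),
   Submodule.map ((w.2.2 : (Vinf F) ≃ₗ[F] (Vinf F)) : (Vinf F) →ₗ[F] (Vinf F))
      (coordSpan F w.1.1.2))

/-!
On `U^n(X, Y)` the measure `ρ` is the `R`-weight of the symbols, which depends only on `n` and
`dim (X ∩ V_n)`, times the Haar probabilities that a random element of `B` carries a coordinate
subspace to one with the same trace on `V_n` as `X`, respectively `Y`. Averaging over the
transvections `v ↦ v + v_{n+1} w` with `w ∈ V_n` shows that the first probability times
`q^{∑_{k ≤ n} k Sym(X)_k}` equals `q^{d (d + 1) / 2}` for `d = dim (X ∩ V_n)`, and likewise for `Y`.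
Once `g` and `h` preserve all `V_m` with `m ≥ N`, they permute the basic sets of level `n ≥ N`,
preserving `n` and `d`, so translation changes `ρ` only through the symbol exponents, which gives
the cocycle. These basic sets are a countable cover stable under nonempty intersections, and they
determine the measure.
-/

open scoped Pointwise ENNReal

theorem sum_measure_eq_natCard_mul_measure {α ι : Type*} [MeasurableSpace α] [Fintype ι]
    (μ : Measure α) {E : ι → Set α} {S : Set α} {k : ℕ} (hE : ∀ i, MeasurableSet (E i))
    (hS : MeasurableSet S) (hES : ∀ i, E i ⊆ S)
    (hk : ∀ a ∈ S, Nat.card {i // a ∈ E i} = k) :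
    ∑ i, μ (E i) = k * μ S := by
  classical
  have hcount : ∀ a,
      ∑ i, (E i).indicator (1 : α → ℝ≥0∞) a = S.indicator (fun _ => (k : ℝ≥0∞)) a := by
    intro a
    by_cases ha : a ∈ S
    · rw [Set.indicator_of_mem ha, ← hk a ha, Nat.card_eq_fintype_card, Fintype.card_subtype]
      simp [Set.indicator_apply]
    · rw [Set.indicator_of_notMem ha]
      exact Finset.sum_eq_zero fun i _ => Set.indicator_of_notMem (fun h => ha (hES i h)) _
  calc ∑ i, μ (E i) = ∑ i, ∫⁻ a, (E i).indicator 1 a ∂μ := by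
        simp_rw [lintegral_indicator_one (hE _)]
    _ = ∫⁻ a, ∑ i, (E i).indicator 1 a ∂μ :=
      (lintegral_finsetSum _ fun i _ => measurable_one.indicator (hE i)).symm
    _ = k * μ S := by simp_rw [hcount, lintegral_indicator_const hS]

theorem eq_ofReal_zpow_sub_mul {q : ℕ} (hq : q ≠ 0) {a b c : ℝ≥0∞} {m n : ℕ}
    (ha : a * (q : ℝ≥0∞) ^ m = c) (hb : b * (q : ℝ≥0∞) ^ n = c) :
    b = ENNReal.ofReal ((q : ℝ) ^ ((m : ℤ) - n)) * a := by
  have hq0 : (q : ℝ≥0∞) ≠ 0 := by exact_mod_cast hq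
  have hqt : (q : ℝ≥0∞) ≠ ⊤ := ENNReal.natCast_ne_top q
  have hqR : (0 : ℝ) < q := by exact_mod_cast Nat.pos_of_ne_zero hq
  have hpow : ENNReal.ofReal ((q : ℝ) ^ ((m : ℤ) - n)) = (q : ℝ≥0∞) ^ m * ((q : ℝ≥0∞) ^ n)⁻¹ := by
    rw [zpow_sub₀ hqR.ne', zpow_natCast, zpow_natCast, div_eq_mul_inv,
      ENNReal.ofReal_mul (by positivity), ENNReal.ofReal_inv_of_pos (by positivity),
      ENNReal.ofReal_pow hqR.le, ENNReal.ofReal_pow hqR.le, ENNReal.ofReal_natCast]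
  rw [hpow, mul_right_comm, mul_comm _ a, ha, ← hb, mul_assoc,
    ENNReal.mul_inv_cancel (pow_ne_zero _ hq0) (ENNReal.pow_ne_top hqt), mul_one]

theorem exists_perm_map_eq {α : Type*} {s A B : Finset α} (hA : A ⊆ s) (hB : B ⊆ s)
    (h : A.card = B.card) :
    ∃ σ : Equiv.Perm α, A.map σ.toEmbedding = B ∧ ∀ i ∉ s, σ i = i := by
  classical
  have hsub : ∀ {C : Finset α}, C ⊆ s →
      (C.subtype (· ∈ s)).map (Function.Embedding.subtype _) = C := fun hC => by
    rw [Finset.subtype_map, Finset.filter_true_of_mem fun i hi => hC hi]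
  obtain ⟨τ, hτ⟩ : ∃ τ : Equiv.Perm s,
      (A.subtype (· ∈ s)).map τ.toEmbedding = B.subtype (· ∈ s) := by
    refine Equiv.Perm.exists_map_finset_eq _ _ ?_
    rw [← Finset.card_map (Function.Embedding.subtype _), hsub hA, h,
      ← Finset.card_map (Function.Embedding.subtype _), hsub hB]
  refine ⟨Equiv.Perm.ofSubtype τ, ?_, fun i hi => Equiv.Perm.ofSubtype_apply_of_not_mem τ hi⟩
  rw [← hsub hA, ← hsub hB, ← hτ, Finset.map_map, Finset.map_map]
  congr 1
  ext i
  simp [Equiv.Perm.ofSubtype_apply_coe]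

variable {K : Type} [Field K]

/-- The Grassmannian `Gr(V)`: the set of all subspaces of `V`. -/
abbrev Gr (K : Type) [Field K] := Submodule K (Vinf K)

section Flag

theorem Vn_eq_supported (n : ℕ) : Vn K n = Finsupp.supported K K (Set.Iio n) := by
  ext v
  simp only [Finsupp.mem_supported', Set.mem_Iio, not_lt]
  rfl

theorem coordSpan_eq_supported (x : ℕ → Bool) :
    coordSpan K x = Finsupp.supported K K {i | x i = true} :=
  (Finsupp.supported_eq_span_single K _).symm

theorem Vn_mono : Monotone (Vn K) := fun _ _ hmn _ hv i hi => hv i (hmn.trans hi)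

theorem Vn_zero : Vn K 0 = ⊥ := by simp [Vn_eq_supported]

theorem mem_Vn_of_mem_succ {n : ℕ} {v : Vinf K} (hv : v ∈ Vn K (n + 1)) (hn : v n = 0) :
    v ∈ Vn K n := fun i hi => by
  obtain rfl | hi := hi.eq_or_lt
  exacts [hn, hv i hi]

instance finiteDimensional_Vn (n : ℕ) : FiniteDimensional K (Vn K n) := by
  rw [Vn_eq_supported]
  exact (Finsupp.supportedEquivFinsupp (Set.Iio n)).symm.finiteDimensional

theorem finrank_Vn (n : ℕ) : Module.finrank K (Vn K n) = n := by
  rw [Vn_eq_supported, (Finsupp.supportedEquivFinsupp (M := K) (R := K) (Set.Iio n)).finrank_eq,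
    Module.finrank_finsupp_self, Fintype.card_Iio, Nat.card_Iio]

theorem coordSpan_inf_Vn_congr {x y : ℕ → Bool} {n : ℕ} (h : ∀ k < n, x k = y k) :
    coordSpan K x ⊓ Vn K n = coordSpan K y ⊓ Vn K n := by
  simp only [coordSpan_eq_supported, Vn_eq_supported, ← Finsupp.supported_inter]
  congr 1
  ext k
  exact and_congr_left fun hk => by simp [h k hk]

theorem inf_Vn_eq_of_le {X Y : Gr K} {m n : ℕ} (hmn : m ≤ n) (h : X ⊓ Vn K n = Y ⊓ Vn K n) :
    X ⊓ Vn K m = Y ⊓ Vn K m := by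
  rw [← inf_eq_right.mpr (Vn_mono hmn), ← inf_assoc, ← inf_assoc, h]

theorem smul_inf_Vn {g : Vinf K ≃ₗ[K] Vinf K} {n : ℕ} (hg : g • Vn K n = Vn K n) (X : Gr K) :
    g • X ⊓ Vn K n = g • (X ⊓ Vn K n) := by
  conv_lhs => rw [← hg]
  exact (Submodule.map_inf _ g.injective).symm

theorem smul_inf_Vn_eq_iff {g : Vinf K ≃ₗ[K] Vinf K} {n : ℕ} (hg : g • Vn K n = Vn K n)
    {X Y : Gr K} : g • X ⊓ Vn K n = g • Y ⊓ Vn K n ↔ X ⊓ Vn K n = Y ⊓ Vn K n := by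
  rw [smul_inf_Vn hg, smul_inf_Vn hg, smul_left_cancel_iff]

theorem eventually_smul_Vn_eq {g : Vinf K ≃ₗ[K] Vinf K} (hg : g ∈ GLBgrp K) :
    ∀ᶠ n in Filter.atTop, g • Vn K n = Vn K n :=
  Filter.eventually_atTop.mpr hg

theorem Bgrp_le_GLBgrp : Bgrp K ≤ GLBgrp K := fun _ hg => ⟨0, fun n _ => hg n⟩

theorem domLCongr_smul_supported (σ : Equiv.Perm ℕ) (s : Set ℕ) :
    (Finsupp.domLCongr σ : Vinf K ≃ₗ[K] Vinf K) • Finsupp.supported K K s =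
      Finsupp.supported K K (σ '' s) := by
  rw [← Finsupp.lmapDomain_supported K K σ s]
  refine congrArg (Submodule.map · _) (LinearMap.ext fun v => ?_)
  exact Finsupp.equivMapDomain_eq_mapDomain σ v

theorem domLCongr_mem_GLBgrp {σ : Equiv.Perm ℕ} {N : ℕ} (hσ : ∀ i, N ≤ i → σ i = i) :
    (Finsupp.domLCongr σ : Vinf K ≃ₗ[K] Vinf K) ∈ GLBgrp K := by
  refine ⟨N, fun n hn => ?_⟩
  have hIci : σ '' Set.Ici n = Set.Ici n :=
    Set.EqOn.image_eq_self fun i hi => hσ i (hn.trans hi)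
  have hIio : σ '' Set.Iio n = Set.Iio n := by
    rw [← Set.compl_Ici, Set.image_compl_eq σ.bijective, hIci]
  rw [Vn_eq_supported]
  exact (domLCongr_smul_supported σ _).trans (by rw [hIio])

theorem exists_perm_image_eq_of_mem_Tset {x y : ℕ → Bool} (h : (x, y) ∈ Tset) :
    ∃ (σ : Equiv.Perm ℕ) (N : ℕ), (∀ i, N ≤ i → σ i = i) ∧
      σ '' {i | x i = true} = {i | y i = true} := by
  obtain ⟨N, htail : ∀ k, N < k → x k = y k, hcard⟩ := h
  obtain ⟨σ, hσ, hfix⟩ := exists_perm_map_eq (Finset.filter_subset _ _)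
    (Finset.filter_subset _ _) hcard
  have hfix : ∀ i, N + 1 ≤ i → σ i = i := fun i hi => hfix i (by simpa using hi)
  refine ⟨σ, N + 1, hfix, ?_⟩
  have hsplit : ∀ z : ℕ → Bool, {i | z i = true} =
      ↑((Finset.range (N + 1)).filter (z · = true)) ∪ {i | N + 1 ≤ i ∧ z i = true} := by
    intro z
    ext i
    simp only [Finset.coe_filter, Finset.mem_range, Set.mem_union, Set.mem_ofPred_eq,
      ← or_and_right, lt_or_ge, true_and]
  have htail_image : σ '' {i | N + 1 ≤ i ∧ x i = true} = {i | N + 1 ≤ i ∧ y i = true} := by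
    rw [Set.EqOn.image_eq_self fun i hi => hfix i hi.1]
    ext i
    exact and_congr_right fun hi => by rw [htail i hi]
  rw [hsplit x, hsplit y, Set.image_union, htail_image, ← hσ, Finset.coe_map]
  rfl

theorem exists_mem_GLBgrp_smul_coordSpan {x y : ℕ → Bool} (h : (x, y) ∈ Tset) :
    ∃ g ∈ GLBgrp K, g • coordSpan K x = coordSpan K y := by
  obtain ⟨σ, N, hfix, hσ⟩ := exists_perm_image_eq_of_mem_Tset h
  refine ⟨Finsupp.domLCongr σ, domLCongr_mem_GLBgrp hfix, ?_⟩
  rw [coordSpan_eq_supported, coordSpan_eq_supported, domLCongr_smul_supported, hσ]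

end Flag

section Symbol

/-- The dimension of the truncation `X ∩ V_n`. -/
noncomputable abbrev truncDim (X : Gr K) (n : ℕ) : ℕ := Module.finrank K ↥(X ⊓ Vn K n)

theorem truncDim_zero (X : Gr K) : truncDim X 0 = 0 := by
  rw [truncDim, Vn_zero, inf_bot_eq, finrank_bot]

theorem inf_Vn_le_succ (X : Gr K) (n : ℕ) : X ⊓ Vn K n ≤ X ⊓ Vn K (n + 1) :=
  inf_le_inf_left X (Vn_mono n.le_succ)

theorem truncDim_succ (X : Gr K) (n : ℕ) : truncDim X (n + 1) = truncDim X n + symInc K X n :=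
  (Nat.add_sub_cancel' (Submodule.finrank_mono (inf_Vn_le_succ X n))).symm

theorem truncDim_congr {X Y : Gr K} {m n : ℕ} (hmn : m ≤ n) (h : X ⊓ Vn K n = Y ⊓ Vn K n) :
    truncDim X m = truncDim Y m := by
  rw [truncDim, inf_Vn_eq_of_le hmn h]

theorem truncDim_smul {g : Vinf K ≃ₗ[K] Vinf K} {n : ℕ} (hg : g • Vn K n = Vn K n) (X : Gr K) :
    truncDim (g • X) n = truncDim X n := by
  rw [truncDim, smul_inf_Vn hg]
  exact LinearEquiv.finrank_map_eq g _

theorem symInc_eq_zero_iff {X : Gr K} {n : ℕ} :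
    symInc K X n = 0 ↔ X ⊓ Vn K (n + 1) = X ⊓ Vn K n := by
  refine ⟨fun h => ?_, fun h => by rw [symInc, h, Nat.sub_self]⟩
  refine (Submodule.eq_of_le_of_finrank_eq (inf_Vn_le_succ X n) ?_).symm
  simpa [h] using (truncDim_succ X n).symm

theorem symInc_eq_one_of_mem {X : Gr K} {n : ℕ} {v : Vinf K} (hv : v ∈ X ⊓ Vn K (n + 1))
    (hn : v n ≠ 0) : symInc K X n = 1 := by
  let f : Module.Dual K ↥(X ⊓ Vn K (n + 1)) := (Finsupp.lapply n).domRestrict (X ⊓ Vn K (n + 1))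
  have hf : f ≠ 0 := fun h => hn (LinearMap.congr_fun h ⟨v, hv⟩)
  have hker : LinearMap.ker f = (X ⊓ Vn K n).comap (X ⊓ Vn K (n + 1)).subtype := by
    ext u
    exact ⟨fun hu => ⟨u.2.1, mem_Vn_of_mem_succ u.2.2 hu⟩, fun hu => hu.2 n le_rfl⟩
  have hdim : Module.finrank K (LinearMap.ker f) + 1 = truncDim X (n + 1) :=
    Module.Dual.finrank_ker_add_one_of_ne_zero (V₁ := ↥(X ⊓ Vn K (n + 1))) hf
  rw [hker, (Submodule.comapSubtypeEquivOfLe (inf_Vn_le_succ X n)).finrank_eq] at hdim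
  exact Nat.add_left_cancel ((truncDim_succ X n).symm.trans hdim.symm)

theorem symInc_eq_zero_or_exists_mem (X : Gr K) (n : ℕ) :
    symInc K X n = 0 ∨ ∃ v ∈ X ⊓ Vn K (n + 1), v n = 1 := by
  by_cases h : ∃ v ∈ X ⊓ Vn K (n + 1), v n ≠ 0
  · obtain ⟨v, hv, hn⟩ := h
    exact Or.inr ⟨(v n)⁻¹ • v, Submodule.smul_mem _ _ hv, by simp [hn]⟩
  · push Not at h
    refine Or.inl (symInc_eq_zero_iff.mpr (le_antisymm (fun v hv => ?_) (inf_Vn_le_succ X n)))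
    exact ⟨hv.1, mem_Vn_of_mem_succ hv.2 (h v hv)⟩

theorem symInc_eq_one_iff {X : Gr K} {n : ℕ} :
    symInc K X n = 1 ↔ ∃ v ∈ X ⊓ Vn K (n + 1), v n = 1 := by
  refine ⟨fun h => (symInc_eq_zero_or_exists_mem X n).resolve_left (by omega), ?_⟩
  rintro ⟨v, hv, hn⟩
  exact symInc_eq_one_of_mem hv (by simp [hn])

theorem symInc_eq_zero_or_one (X : Gr K) (n : ℕ) : symInc K X n = 0 ∨ symInc K X n = 1 :=
  (symInc_eq_zero_or_exists_mem X n).imp_right symInc_eq_one_iff.mpr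

theorem symInc_congr {X Y : Gr K} {n : ℕ} (h : truncDim X n = truncDim Y n)
    (h' : truncDim X (n + 1) = truncDim Y (n + 1)) : symInc K X n = symInc K Y n :=
  congrArg₂ (· - ·) h' h

theorem symInc_smul {g : Vinf K ≃ₗ[K] Vinf K} (hg : g ∈ Bgrp K) (X : Gr K) (n : ℕ) :
    symInc K (g • X) n = symInc K X n :=
  symInc_congr (truncDim_smul (hg n) X) (truncDim_smul (hg (n + 1)) X)

theorem truncDim_eq_sum (X : Gr K) (n : ℕ) :
    truncDim X n = ∑ k ∈ Finset.range n, symInc K X k := by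
  induction n with
  | zero => exact truncDim_zero X
  | succ n ih => rw [truncDim_succ, ih, Finset.sum_range_succ]

/-- The symbol `Sym(X)` as a 0–1 sequence, indexed from `0`. -/
noncomputable def symbol (X : Gr K) : ℕ → Bool := fun k => decide (symInc K X k = 1)

theorem symInc_eq_toNat_symbol (X : Gr K) (k : ℕ) : symInc K X k = (symbol X k).toNat := by
  rcases symInc_eq_zero_or_one X k with h | h <;> simp [symbol, h]

theorem symbol_eq_iff {X Y : Gr K} {k : ℕ} :
    symbol X k = symbol Y k ↔ symInc K X k = symInc K Y k := by
  rw [symInc_eq_toNat_symbol, symInc_eq_toNat_symbol]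
  cases symbol X k <;> cases symbol Y k <;> simp

theorem symbol_smul {g : Vinf K ≃ₗ[K] Vinf K} (hg : g ∈ Bgrp K) (X : Gr K) :
    symbol (g • X) = symbol X :=
  funext fun k => symbol_eq_iff.mpr (symInc_smul hg X k)

theorem symbol_coordSpan (x : ℕ → Bool) : symbol (coordSpan K x) = x := by
  funext k
  rcases hk : x k
  · have h : symInc K (coordSpan K x) k = 0 := by
      refine (symInc_eq_zero_or_exists_mem _ k).resolve_right ?_
      rintro ⟨v, hv, hv1⟩
      rw [coordSpan_eq_supported] at hv
      have := (Finsupp.mem_supported' K v).mp hv.1 k (by simp [hk])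
      simp_all
    simp [symbol, h]
  · have h : symInc K (coordSpan K x) k = 1 := by
      refine symInc_eq_one_iff.mpr ⟨Finsupp.single k 1, ⟨?_, ?_⟩, by simp⟩
      · exact Submodule.subset_span ⟨k, hk, rfl⟩
      · rw [Vn_eq_supported]
        exact Finsupp.single_mem_supported K _ (Nat.lt_succ_self k)
    simp [symbol, h]

theorem trueCount_symbol (X : Gr K) (n : ℕ) :
    trueCount (fun k : Fin n => symbol X k) = truncDim X n := by
  rw [trueCount, Finset.card_filter, truncDim_eq_sum, Finset.sum_range]
  exact Finset.sum_congr rfl fun k _ => by rw [symInc_eq_toNat_symbol]; cases symbol X k <;> rfl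

theorem truncDim_eq_iff_symbol_eq {X Y : Gr K} {n : ℕ} (h : truncDim X n = truncDim Y n) :
    (∀ k, n ≤ k → truncDim X k = truncDim Y k) ↔ ∀ k, n ≤ k → symbol X k = symbol Y k := by
  refine ⟨fun H k hk => symbol_eq_iff.mpr (symInc_congr (H k hk) (H _ (hk.trans k.le_succ))), ?_⟩
  intro H k hk
  induction k, hk using Nat.le_induction with
  | base => exact h
  | succ k hk ih => rw [truncDim_succ, truncDim_succ, ih, symbol_eq_iff.mp (H k hk)]

/-- The truncated weighted symbol sum `∑_{k ≤ n} k · Sym(X)_k`, whose 1-based weight of the `k`-th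
entry becomes `k + 1` in 0-based indexing. -/
noncomputable def symbolWeight (X : Gr K) (n : ℕ) : ℕ :=
  ∑ k ∈ Finset.range n, (k + 1) * symInc K X k

theorem symbolWeight_congr {X Y : Gr K} {n : ℕ} (h : X ⊓ Vn K n = Y ⊓ Vn K n) :
    symbolWeight X n = symbolWeight Y n :=
  Finset.sum_congr rfl fun k hk => by
    have hk := Finset.mem_range.mp hk
    rw [symInc_congr (truncDim_congr hk.le h) (truncDim_congr hk h)]

/-- The exponent `∑_k k · (Sym(X)_k - Sym(gX)_k)` of the cocycle. -/
noncomputable def symbolCocycle (g : Vinf K ≃ₗ[K] Vinf K) (X : Gr K) : ℤ :=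
  ∑ᶠ k : ℕ, ((k : ℤ) + 1) * ((symInc K X k : ℤ) - (symInc K (g • X) k : ℤ))

theorem support_symbolCocycle_subset {g : Vinf K ≃ₗ[K] Vinf K} {N : ℕ}
    (hg : ∀ n, N ≤ n → g • Vn K n = Vn K n) (X : Gr K) :
    (Function.support fun k : ℕ =>
      ((k : ℤ) + 1) * ((symInc K X k : ℤ) - (symInc K (g • X) k : ℤ))) ⊆ Finset.range N := by
  intro k hk
  contrapose! hk
  have hNk : N ≤ k := by simpa using hk
  have : symInc K (g • X) k = symInc K X k :=
    symInc_congr (truncDim_smul (hg k hNk) X) (truncDim_smul (hg _ (hNk.trans k.le_succ)) X)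
  simp [this]

theorem symbolCocycle_eq_sub {g : Vinf K ≃ₗ[K] Vinf K} {n : ℕ}
    (hg : ∀ m, n ≤ m → g • Vn K m = Vn K m) (X : Gr K) :
    symbolCocycle g X = (symbolWeight X n : ℤ) - symbolWeight (g • X) n := by
  rw [symbolCocycle, finsum_eq_sum_of_support_subset _ (support_symbolCocycle_subset hg X)]
  simp only [symbolWeight, Nat.cast_sum, ← Finset.sum_sub_distrib]
  exact Finset.sum_congr rfl fun k _ => by push_cast; ring

end Symbol

section Transvection

theorem smul_submodule_congr {g h : Vinf K ≃ₗ[K] Vinf K} {X : Gr K} (hgh : ∀ v ∈ X, g v = h v) :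
    g • X = h • X :=
  SetLike.coe_injective (Set.image_congr hgh)

theorem mem_Bgrp_of_smul_le {g : Vinf K ≃ₗ[K] Vinf K} (hg : ∀ n, g • Vn K n ≤ Vn K n) :
    g ∈ Bgrp K := fun n =>
  Submodule.eq_of_le_of_finrank_eq (hg n) (LinearEquiv.finrank_map_eq g _)

/-- The element `v ↦ v + v_n w` of `B`, for `w ∈ V_n`. Averaging over these elements is what
relates the Haar measures of trace conditions at levels `n` and `n + 1`. -/
noncomputable def flagTransvection (n : ℕ) (w : Vn K n) : Bgrp K :=
  ⟨LinearEquiv.transvection (f := Finsupp.lapply n) (w.2 n le_rfl), mem_Bgrp_of_smul_le fun m => by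
    rintro _ ⟨v, hv, rfl⟩
    refine Submodule.add_mem _ hv ?_
    rcases le_or_gt m n with hmn | hnm
    · simp [hv n hmn]
    · exact Submodule.smul_mem _ _ (Vn_mono hnm.le w.2)⟩

theorem flagTransvection_apply (n : ℕ) (w : Vn K n) (v : Vinf K) :
    (flagTransvection n w : Vinf K ≃ₗ[K] Vinf K) v = v + v n • (w : Vinf K) := rfl

theorem flagTransvection_smul_inf_Vn (n : ℕ) (w : Vn K n) (X : Gr K) :
    flagTransvection n w • X ⊓ Vn K n = X ⊓ Vn K n := by
  rw [Subgroup.smul_def, smul_inf_Vn ((flagTransvection n w).2 n)]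
  refine (smul_submodule_congr (h := 1) fun v hv => ?_).trans (one_smul _ _)
  simp [flagTransvection_apply, hv.2 n le_rfl]

theorem inf_Vn_succ_eq_sup_span {X : Gr K} {n : ℕ} {v : Vinf K} (hv : v ∈ X ⊓ Vn K (n + 1))
    (hn : v n = 1) : X ⊓ Vn K (n + 1) = X ⊓ Vn K n ⊔ K ∙ v := by
  refine le_antisymm (fun u hu => ?_)
    (sup_le (inf_Vn_le_succ X n) ((Submodule.span_singleton_le_iff_mem _ _).mpr hv))
  have hsub : u - u n • v ∈ X ⊓ Vn K (n + 1) := Submodule.sub_mem _ hu (Submodule.smul_mem _ _ hv)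
  refine Submodule.mem_sup.mpr ⟨u - u n • v, ⟨hsub.1, mem_Vn_of_mem_succ hsub.2 (by simp [hn])⟩,
    u n • v, Submodule.smul_mem _ _ (Submodule.mem_span_singleton_self v), sub_add_cancel _ _⟩

theorem inf_Vn_succ_eq_iff_mem {X Y : Gr K} {n : ℕ} (h : Y ⊓ Vn K n = X ⊓ Vn K n) {v : Vinf K}
    (hv : v ∈ Y ⊓ Vn K (n + 1)) (hn : v n = 1) :
    Y ⊓ Vn K (n + 1) = X ⊓ Vn K (n + 1) ↔ v ∈ X := by
  refine ⟨fun he => (he ▸ hv).1, fun hvX => ?_⟩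
  rw [inf_Vn_succ_eq_sup_span hv hn, inf_Vn_succ_eq_sup_span ⟨hvX, hv.2⟩ hn, h]

theorem mem_flagTransvection_smul_iff {X : Gr K} {n : ℕ} (w : Vn K n) {v : Vinf K} (hn : v n = 1) :
    v ∈ flagTransvection n w • X ↔ v - w ∈ X := by
  have hv : (flagTransvection n w : Vinf K ≃ₗ[K] Vinf K) (v - w) = v := by
    simp [flagTransvection_apply, hn, w.2 n le_rfl]
  conv_lhs => rw [← hv]
  exact (flagTransvection n w : Vinf K ≃ₗ[K] Vinf K).injective.mem_set_image

theorem natCard_flagTransvection_smul_inf_eq {X Y : Gr K} {n : ℕ}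
    (h : Y ⊓ Vn K n = X ⊓ Vn K n) (hX : symInc K X n = 1) (hY : symInc K Y n = 1) :
    Nat.card {w : Vn K n // Y ⊓ Vn K (n + 1) = flagTransvection n w • X ⊓ Vn K (n + 1)} =
      Nat.card ↥(X ⊓ Vn K n) := by
  obtain ⟨x, hx, hxn⟩ := symInc_eq_one_iff.mp hX
  obtain ⟨y, hy, hyn⟩ := symInc_eq_one_iff.mp hY
  have hyx : y - x ∈ Vn K n :=
    mem_Vn_of_mem_succ (Submodule.sub_mem _ hy.2 hx.2) (by simp [hxn, hyn])
  have hiff : ∀ w : Vn K n, Y ⊓ Vn K (n + 1) = flagTransvection n w • X ⊓ Vn K (n + 1) ↔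
      ((⟨y - x, hyx⟩ - w : Vn K n) : Vinf K) ∈ X := fun w => by
    rw [inf_Vn_succ_eq_iff_mem (by rw [flagTransvection_smul_inf_Vn, h]) hy hyn,
      mem_flagTransvection_smul_iff w hyn, Submodule.coe_sub, sub_right_comm,
      X.sub_mem_iff_left hx.1]
  rw [inf_comm X]
  exact Nat.card_congr (((Equiv.subLeft (⟨y - x, hyx⟩ : Vn K n)).subtypeEquiv hiff).trans
    (Equiv.subtypeSubtypeEquivSubtypeInter (· ∈ Vn K n) (· ∈ X)))

end Transvection

section HaarMeasure

/-- The set of all `a ∈ B` such that `aZ` has the same trace on `V_n` as `X`. -/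
def traceTransporter (n : ℕ) (Z X : Gr K) : Set (Bgrp K) :=
  {a | a • Z ⊓ Vn K n = X ⊓ Vn K n}

theorem smul_inf_Vn_eq_of_apply_single_eq {a b : Bgrp K} {n : ℕ}
    (h : ∀ i < n, (a : Vinf K ≃ₗ[K] Vinf K) (Finsupp.single i 1) =
      (b : Vinf K ≃ₗ[K] Vinf K) (Finsupp.single i 1)) (X : Gr K) :
    a • X ⊓ Vn K n = b • X ⊓ Vn K n := by
  rw [Subgroup.smul_def, Subgroup.smul_def, smul_inf_Vn (a.2 n), smul_inf_Vn (b.2 n)]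
  refine smul_submodule_congr fun v hv => ?_
  have hspan : v ∈ Submodule.span K ((fun i => Finsupp.single i (1 : K)) '' Set.Iio n) := by
    rw [← Finsupp.supported_eq_span_single, ← Vn_eq_supported]
    exact hv.2
  have heq : Set.EqOn (a : Vinf K ≃ₗ[K] Vinf K) (b : Vinf K ≃ₗ[K] Vinf K)
      ((fun i => Finsupp.single i (1 : K)) '' Set.Iio n) := Set.forall_mem_image.mpr h
  exact LinearMap.eqOn_span (f := (a : Vinf K ≃ₗ[K] Vinf K).toLinearMap)
    (g := (b : Vinf K ≃ₗ[K] Vinf K).toLinearMap) heq hspan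

theorem measurableSet_traceTransporter [Countable K] (n : ℕ) (Z X : Gr K) :
    MeasurableSet (traceTransporter n Z X) := by
  let _ : MeasurableSpace (Vinf K) := ⊤
  have : DiscreteMeasurableSpace (Vinf K) := ⟨fun _ => trivial⟩
  let basisImages : Bgrp K → ℕ → Vinf K :=
    fun a i => (a : Vinf K ≃ₗ[K] Vinf K) (Finsupp.single i 1)
  let eval : Bgrp K → Fin n → Vinf K := fun a i => basisImages a i
  have heval : Measurable eval := measurable_pi_lambda _ fun i =>
    (measurable_pi_apply (i : ℕ)).comp (comap_measurable basisImages)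
  have hsat : traceTransporter n Z X = eval ⁻¹' (eval '' traceTransporter n Z X) := by
    refine (Set.subset_preimage_image _ _).antisymm ?_
    rintro b ⟨a, ha, hab⟩
    refine Eq.trans ?_ ha
    exact (smul_inf_Vn_eq_of_apply_single_eq (fun i hi => congrFun hab ⟨i, hi⟩) Z).symm
  rw [hsat]
  exact heval (MeasurableSet.of_discrete)

theorem traceTransporter_succ_subset (n : ℕ) (Z X : Gr K) :
    traceTransporter (n + 1) Z X ⊆ traceTransporter n Z X :=
  fun _ ha => inf_Vn_eq_of_le n.le_succ ha

theorem traceTransporter_congr_right {n : ℕ} {X Y : Gr K} (h : X ⊓ Vn K n = Y ⊓ Vn K n)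
    (Z : Gr K) : traceTransporter n Z X = traceTransporter n Z Y := by
  rw [traceTransporter, h, traceTransporter]

theorem traceTransporter_succ_of_symInc_eq_zero {n : ℕ} {Z X : Gr K} (hZ : symInc K Z n = 0)
    (hX : symInc K X n = 0) : traceTransporter (n + 1) Z X = traceTransporter n Z X := by
  ext a
  have ha : symInc K (a • Z) n = 0 := (symInc_smul a.2 Z n).trans hZ
  change _ = _ ↔ _ = _
  rw [symInc_eq_zero_iff.mp ha, symInc_eq_zero_iff.mp hX]

variable {μ : Measure (Bgrp K)} [Finite K]

theorem measure_traceTransporter_smul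
    (hμ : ∀ (b : Bgrp K) (S : Set (Bgrp K)), MeasurableSet S → μ ((fun a => b * a) ⁻¹' S) = μ S)
    (n : ℕ) (Z X : Gr K) (b : Bgrp K) :
    μ (traceTransporter n Z (b • X)) = μ (traceTransporter n Z X) := by
  rw [← hμ b _ (measurableSet_traceTransporter n Z (b • X))]
  congr 1
  ext a
  change (b * a) • Z ⊓ Vn K n = b • X ⊓ Vn K n ↔ a • Z ⊓ Vn K n = X ⊓ Vn K n
  rw [mul_smul]
  exact smul_inf_Vn_eq_iff (b.2 n)

theorem natCard_pow_mul_measure_traceTransporter_succ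
    (hμ : ∀ (b : Bgrp K) (S : Set (Bgrp K)), MeasurableSet S → μ ((fun a => b * a) ⁻¹' S) = μ S)
    {n : ℕ} {Z X : Gr K} (hZ : symInc K Z n = 1) (hX : symInc K X n = 1) :
    (Nat.card K : ℝ≥0∞) ^ n * μ (traceTransporter (n + 1) Z X) =
      (Nat.card K : ℝ≥0∞) ^ truncDim X n * μ (traceTransporter n Z X) := by
  have : Finite (Vn K n) := Module.finite_of_finite K
  have : Fintype (Vn K n) := Fintype.ofFinite _
  have hsum := sum_measure_eq_natCard_mul_measure μ
    (E := fun w : Vn K n => traceTransporter (n + 1) Z (flagTransvection n w • X))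
    (fun _ => measurableSet_traceTransporter _ _ _) (measurableSet_traceTransporter n Z X)
    (fun w => (traceTransporter_succ_subset n Z _).trans
      (traceTransporter_congr_right (flagTransvection_smul_inf_Vn n w X) Z).subset)
    (fun a ha => natCard_flagTransvection_smul_inf_eq ha hX ((symInc_smul a.2 Z n).trans hZ))
  simp_rw [measure_traceTransporter_smul hμ] at hsum
  rwa [Finset.sum_const, Finset.card_univ, nsmul_eq_mul, ← Nat.card_eq_fintype_card,
    Module.natCard_eq_pow_finrank (K := K) (V := Vn K n), finrank_Vn, Nat.cast_pow,
    Module.natCard_eq_pow_finrank (K := K) (V := ↥(X ⊓ Vn K n)), Nat.cast_pow] at hsum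

theorem measure_traceTransporter_mul_pow_symbolWeight
    (hμ : ∀ (b : Bgrp K) (S : Set (Bgrp K)), MeasurableSet S → μ ((fun a => b * a) ⁻¹' S) = μ S)
    {n : ℕ} {Z X : Gr K} (h : ∀ k < n, symInc K Z k = symInc K X k) :
    μ (traceTransporter n Z X) * (Nat.card K : ℝ≥0∞) ^ symbolWeight X n =
      μ Set.univ * (Nat.card K : ℝ≥0∞) ^ ∑ i ∈ Finset.range (truncDim X n), (i + 1) := by
  induction n with
  | zero =>
    have huniv : traceTransporter 0 Z X = Set.univ :=
      Set.eq_univ_of_forall fun a => by simp [traceTransporter, Vn_zero]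
    simp [huniv, symbolWeight, truncDim_zero]
  | succ n ih =>
    have ih := ih fun k hk => h k (hk.trans n.lt_succ_self)
    have hn := h n n.lt_succ_self
    rw [symbolWeight, Finset.sum_range_succ, ← symbolWeight, truncDim_succ]
    rcases symInc_eq_zero_or_one X n with h0 | h1
    · rw [traceTransporter_succ_of_symInc_eq_zero (hn.trans h0) h0, h0]
      exact ih
    · have hstep := natCard_pow_mul_measure_traceTransporter_succ hμ (hn.trans h1) h1
      set q := (Nat.card K : ℝ≥0∞)
      calc μ (traceTransporter (n + 1) Z X) * q ^ (symbolWeight X n + (n + 1) * symInc K X n)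
          = q ^ n * μ (traceTransporter (n + 1) Z X) * q ^ symbolWeight X n * q := by
            rw [h1]; ring
        _ = μ (traceTransporter n Z X) * q ^ symbolWeight X n * q ^ (truncDim X n + 1) := by
            rw [hstep]; ring
        _ = μ Set.univ * q ^ ∑ i ∈ Finset.range (truncDim X n + symInc K X n), (i + 1) := by
            rw [ih, h1, Finset.sum_range_succ]; ring

end HaarMeasure

section BasicSets

/-- The groupoid `Gr²(V)` of pairs of `GLB`-equivalent subspaces, as a subset of `Gr(V) × Gr(V)`. -/
def Gr2 (K : Type) [Field K] : Set (Gr K × Gr K) :=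
  {p | ∃ g ∈ GLBgrp K, g • p.1 = p.2}

/-- The componentwise action of a pair of automorphisms on pairs of subspaces. -/
noncomputable def pairSMul (g h : Vinf K ≃ₗ[K] Vinf K) : Equiv.Perm (Gr K × Gr K) :=
  (MulAction.toPerm g).prodCongr (MulAction.toPerm h)

/-- The nonempty basic sets `U^n(X, Y)` of level `n ≥ N`, each presented as the basic set of one of
its points. -/
def basicSets (K : Type) [Field K] (N : ℕ) : Set (Set (Gr K × Gr K)) :=
  {A | ∃ n ≥ N, ∃ p : Gr K × Gr K, p ∈ Upair K n p.1 p.2 ∧ A = Upair K n p.1 p.2}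

theorem Upair_congr {n : ℕ} {X Y X' Y' : Gr K} (hX : X ⊓ Vn K n = X' ⊓ Vn K n)
    (hY : Y ⊓ Vn K n = Y' ⊓ Vn K n) : Upair K n X Y = Upair K n X' Y' := by
  rw [Upair, hX, hY, Upair]

theorem Upair_eq_of_mem {n : ℕ} {X Y : Gr K} {p : Gr K × Gr K} (hp : p ∈ Upair K n X Y) :
    Upair K n X Y = Upair K n p.1 p.2 :=
  Upair_congr hp.2.1.symm hp.2.2.1.symm

theorem mem_Upair_of_le {m n : ℕ} (hmn : m ≤ n) {X Y : Gr K} {p : Gr K × Gr K}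
    (hp : p ∈ Upair K m X Y) : p ∈ Upair K n p.1 p.2 :=
  ⟨hp.1, rfl, rfl, fun k hk => hp.2.2.2 k (hmn.trans hk)⟩

theorem Upair_subset_of_le {m n : ℕ} (hmn : m ≤ n) {X Y : Gr K} {p : Gr K × Gr K}
    (hp : p ∈ Upair K m X Y) : Upair K n p.1 p.2 ⊆ Upair K m X Y := by
  rintro r ⟨hr, h₁, h₂, hdim⟩
  refine ⟨hr, (inf_Vn_eq_of_le hmn h₁).trans hp.2.1, (inf_Vn_eq_of_le hmn h₂).trans hp.2.2.1, ?_⟩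
  intro k hk
  rcases le_total n k with hnk | hkn
  · exact hdim k hnk
  · exact (truncDim_congr hkn h₁).trans ((hp.2.2.2 k hk).trans (truncDim_congr hkn h₂).symm)

theorem Upair_inter_Upair {m n : ℕ} {X Y X' Y' : Gr K} {p : Gr K × Gr K}
    (hm : p ∈ Upair K m X Y) (hn : p ∈ Upair K n X' Y') :
    Upair K m X Y ∩ Upair K n X' Y' = Upair K (max m n) p.1 p.2 := by
  rcases le_total m n with h | h
  · rw [max_eq_right h, ← Upair_eq_of_mem hn, Set.inter_eq_right, Upair_eq_of_mem hn]
    exact Upair_subset_of_le h hm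
  · rw [max_eq_left h, ← Upair_eq_of_mem hm, Set.inter_eq_left, Upair_eq_of_mem hm]
    exact Upair_subset_of_le h hn

theorem isPiSystem_Upair :
    IsPiSystem {A | ∃ (n : ℕ) (X Y : Gr K), A = Upair K n X Y} := by
  rintro _ ⟨m, X, Y, rfl⟩ _ ⟨n, X', Y', rfl⟩ ⟨p, hm, hn⟩
  exact ⟨_, _, _, Upair_inter_Upair hm hn⟩

theorem measurableSet_Upair (n : ℕ) (X Y : Gr K) : MeasurableSet (Upair K n X Y) :=
  MeasurableSpace.measurableSet_generateFrom ⟨n, X, Y, rfl⟩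

theorem measurableSet_of_mem_basicSets {N : ℕ} {A : Set (Gr K × Gr K)} (hA : A ∈ basicSets K N) :
    MeasurableSet A := by
  obtain ⟨n, -, p, -, rfl⟩ := hA
  exact measurableSet_Upair n p.1 p.2

theorem Upair_inter_mem_basicSets {N n : ℕ} {X Y : Gr K} {A : Set (Gr K × Gr K)}
    (hA : A ∈ basicSets K N) (h : (Upair K n X Y ∩ A).Nonempty) :
    Upair K n X Y ∩ A ∈ basicSets K N := by
  obtain ⟨m, hm, r, -, rfl⟩ := hA
  obtain ⟨p, hpU, hpA⟩ := h
  exact ⟨max n m, hm.trans (le_max_right n m), p, mem_Upair_of_le (le_max_left n m) hpU,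
    Upair_inter_Upair hpU hpA⟩

theorem countable_basicSets [Finite K] (N : ℕ) : (basicSets K N).Countable := by
  have hfin : ∀ n, (Set.Iic (Vn K n)).Finite := fun n =>
    have : Finite (Vn K n) := Module.finite_of_finite K
    Finite.of_equiv _ (Submodule.mapIic (Vn K n)).toEquiv
  have hsub : basicSets K N ⊆ ⋃ n, (fun q : Gr K × Gr K => Upair K n q.1 q.2) ''
      (Set.Iic (Vn K n) ×ˢ Set.Iic (Vn K n)) := by
    rintro _ ⟨n, -, p, -, rfl⟩
    exact Set.mem_iUnion.mpr ⟨n, (p.1 ⊓ Vn K n, p.2 ⊓ Vn K n),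
      Set.mk_mem_prod (Set.mem_Iic.mpr inf_le_right) (Set.mem_Iic.mpr inf_le_right),
      Upair_congr (by rw [inf_assoc, inf_idem]) (by rw [inf_assoc, inf_idem])⟩
  exact (Set.countable_iUnion fun n => (((hfin n).prod (hfin n)).image _).countable).mono hsub

theorem exists_mem_Upair_of_mem_Gr2 {p : Gr K × Gr K} (hp : p ∈ Gr2 K) :
    ∃ n, p ∈ Upair K n p.1 p.2 := by
  obtain ⟨g, ⟨n, hg⟩, hgp⟩ := id hp
  refine ⟨n, hp, rfl, rfl, fun k hk => ?_⟩
  rw [← hgp]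
  exact (truncDim_smul (hg k hk) p.1).symm

theorem sUnion_basicSets (N : ℕ) : ⋃₀ basicSets K N = Gr2 K := by
  refine Set.Subset.antisymm (Set.sUnion_subset ?_) fun p hp => ?_
  · rintro _ ⟨n, -, p, -, rfl⟩
    exact fun r hr => hr.1
  · obtain ⟨n, hn⟩ := exists_mem_Upair_of_mem_Gr2 hp
    have hmax := mem_Upair_of_le (le_max_left n N) hn
    exact ⟨_, ⟨max n N, le_max_right n N, p, hmax, rfl⟩, hmax⟩

theorem measurableSet_Gr2 [Finite K] : MeasurableSet (Gr2 K) := by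
  rw [← sUnion_basicSets 0]
  exact .sUnion (countable_basicSets 0) fun _ => measurableSet_of_mem_basicSets

theorem Upair_eq_sUnion_basicSets (N n : ℕ) (X Y : Gr K) :
    Upair K n X Y = ⋃₀ {A ∈ basicSets K N | A ⊆ Upair K n X Y} := by
  refine Set.Subset.antisymm (fun p hp => ?_) (Set.sUnion_subset fun A hA => hA.2)
  have hmax := mem_Upair_of_le (le_max_left n N) hp
  exact ⟨_, ⟨⟨max n N, le_max_right n N, p, hmax, rfl⟩,
    Upair_subset_of_le (le_max_left n N) hp⟩, hmax⟩

theorem measure_ext_of_basicSets [Finite K] {μ ν : Measure (Gr K × Gr K)} (N : ℕ)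
    (hμ : μ (Gr2 K)ᶜ = 0) (hν : ν (Gr2 K)ᶜ = 0) (hfin : ∀ A ∈ basicSets K N, μ A ≠ ∞)
    (h : ∀ A ∈ basicSets K N, μ A = ν A) : μ = ν := by
  refine Measure.ext_of_generateFrom_of_cover (T := insert (Gr2 K)ᶜ (basicSets K N)) rfl
    ((countable_basicSets N).insert _) isPiSystem_Upair ?_ ?_ ?_ ?_
  · rw [Set.sUnion_insert, sUnion_basicSets, Set.compl_union_self]
  · rintro _ (rfl | hA)
    exacts [hμ ▸ ENNReal.zero_ne_top, hfin _ hA]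
  · rintro _ (rfl | hA) _ ⟨n, X, Y, rfl⟩
    · rw [measure_mono_null Set.inter_subset_right hμ, measure_mono_null Set.inter_subset_right hν]
    · rcases (Upair K n X Y ∩ _).eq_empty_or_nonempty with he | hne
      · rw [he, measure_empty, measure_empty]
      · exact h _ (Upair_inter_mem_basicSets hA hne)
  · rintro _ (rfl | hA)
    exacts [hμ.trans hν.symm, h _ hA]

theorem pairSMul_mem_Gr2_iff {g h : Vinf K ≃ₗ[K] Vinf K} (hg : g ∈ GLBgrp K) (hh : h ∈ GLBgrp K)
    {p : Gr K × Gr K} : pairSMul g h p ∈ Gr2 K ↔ p ∈ Gr2 K := by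
  constructor
  · rintro ⟨k, hk, hkp : k • g • p.1 = h • p.2⟩
    exact ⟨h⁻¹ * (k * g), mul_mem (inv_mem hh) (mul_mem hk hg), by
      rw [mul_smul, mul_smul, hkp, inv_smul_smul]⟩
  · rintro ⟨k, hk, hkp⟩
    refine ⟨h * (k * g⁻¹), mul_mem hh (mul_mem hk (inv_mem hg)), ?_⟩
    change (h * (k * g⁻¹)) • g • p.1 = h • p.2
    rw [mul_smul, mul_smul, inv_smul_smul, hkp]

theorem pairSMul_mem_Upair_iff {g h : Vinf K ≃ₗ[K] Vinf K} {n : ℕ}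
    (hgh : ∀ m, n ≤ m → g • Vn K m = Vn K m ∧ h • Vn K m = Vn K m) {X Y : Gr K} {p : Gr K × Gr K} :
    pairSMul g h p ∈ Upair K n (g • X) (h • Y) ↔ p ∈ Upair K n X Y := by
  obtain ⟨hgn, hhn⟩ := hgh n le_rfl
  refine and_congr (pairSMul_mem_Gr2_iff ⟨n, fun m hm => (hgh m hm).1⟩
    ⟨n, fun m hm => (hgh m hm).2⟩) (and_congr (smul_inf_Vn_eq_iff hgn)
    (and_congr (smul_inf_Vn_eq_iff hhn) (forall₂_congr fun k hk => ?_)))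
  exact iff_of_eq (congrArg₂ Eq (truncDim_smul (hgh k hk).1 p.1) (truncDim_smul (hgh k hk).2 p.2))

theorem image_pairSMul_Upair {g h : Vinf K ≃ₗ[K] Vinf K} {n : ℕ}
    (hgh : ∀ m, n ≤ m → g • Vn K m = Vn K m ∧ h • Vn K m = Vn K m) (X Y : Gr K) :
    pairSMul g h '' Upair K n X Y = Upair K n (g • X) (h • Y) := by
  ext p
  rw [Equiv.image_eq_preimage_symm, Set.mem_preimage, ← pairSMul_mem_Upair_iff hgh,
    Equiv.apply_symm_apply]

theorem image_pairSMul_mem_basicSets {g h : Vinf K ≃ₗ[K] Vinf K} {N : ℕ}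
    (hgh : ∀ m, N ≤ m → g • Vn K m = Vn K m ∧ h • Vn K m = Vn K m) {A : Set (Gr K × Gr K)}
    (hA : A ∈ basicSets K N) : pairSMul g h '' A ∈ basicSets K N := by
  obtain ⟨n, hn, p, hp, rfl⟩ := hA
  have hgh : ∀ m, n ≤ m → g • Vn K m = Vn K m ∧ h • Vn K m = Vn K m :=
    fun m hm => hgh m (hn.trans hm)
  exact ⟨n, hn, pairSMul g h p, (pairSMul_mem_Upair_iff hgh).mpr hp, image_pairSMul_Upair hgh _ _⟩

theorem exists_forall_smul_Vn_eq {g h : Vinf K ≃ₗ[K] Vinf K} (hg : g ∈ GLBgrp K)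
    (hh : h ∈ GLBgrp K) : ∃ N, ∀ n, N ≤ n → g • Vn K n = Vn K n ∧ h • Vn K n = Vn K n :=
  Filter.eventually_atTop.mp ((eventually_smul_Vn_eq hg).and (eventually_smul_Vn_eq hh))

theorem image_pairSMul_eq_preimage (g h : Vinf K ≃ₗ[K] Vinf K) (A : Set (Gr K × Gr K)) :
    pairSMul g h '' A = pairSMul g⁻¹ h⁻¹ ⁻¹' A :=
  (pairSMul g h).image_eq_preimage_symm A

theorem measurable_pairSMul [Finite K] {g h : Vinf K ≃ₗ[K] Vinf K} (hg : g ∈ GLBgrp K)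
    (hh : h ∈ GLBgrp K) : Measurable (pairSMul g h) := by
  obtain ⟨N, hN⟩ := exists_forall_smul_Vn_eq (inv_mem hg) (inv_mem hh)
  refine measurable_generateFrom ?_
  rintro _ ⟨n, X, Y, rfl⟩
  rw [Upair_eq_sUnion_basicSets N n X Y, Set.preimage_sUnion]
  refine .biUnion ((countable_basicSets N).mono fun _ hA => hA.1) fun A hA => ?_
  have hpre := image_pairSMul_eq_preimage g⁻¹ h⁻¹ A
  rw [inv_inv, inv_inv] at hpre
  exact hpre ▸ measurableSet_of_mem_basicSets (image_pairSMul_mem_basicSets hN hA.1)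

end BasicSets

section QuasiInvariance

theorem psiMap_mem_Gr2 (w : ↥Tset × (Bgrp K × Bgrp K)) : psiMap K w ∈ Gr2 K :=
  (pairSMul_mem_Gr2_iff (p := (coordSpan K w.1.1.1, coordSpan K w.1.1.2))
    (Bgrp_le_GLBgrp w.2.1.2) (Bgrp_le_GLBgrp w.2.2.2)).mpr
      (exists_mem_GLBgrp_smul_coordSpan w.1.2)

theorem mem_traceTransporter_coordSpan_iff {n : ℕ} {x : ℕ → Bool} {X : Gr K} {a : Bgrp K} :
    a ∈ traceTransporter n (coordSpan K x) X ↔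
      (∀ k < n, x k = symbol X k) ∧ a ∈ traceTransporter n (coordSpan K (symbol X)) X := by
  have hcongr : (∀ k < n, x k = symbol X k) →
      a • coordSpan K x ⊓ Vn K n = a • coordSpan K (symbol X) ⊓ Vn K n := fun hx =>
    (smul_inf_Vn_eq_iff (a.2 n)).mpr (coordSpan_inf_Vn_congr hx)
  refine ⟨fun ha => ?_, fun ⟨hx, ha⟩ => (hcongr hx).trans ha⟩
  have hx : ∀ k < n, x k = symbol X k := fun k hk => by
    rw [← symbol_coordSpan (K := K) x, ← symbol_smul a.2]
    exact symbol_eq_iff.mpr (symInc_congr (truncDim_congr hk.le ha) (truncDim_congr hk ha))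
  exact ⟨hx, (hcongr hx).symm.trans ha⟩

theorem psiMap_preimage_Upair {n : ℕ} {p : Gr K × Gr K} (hp : p ∈ Upair K n p.1 p.2) :
    psiMap K ⁻¹' Upair K n p.1 p.2 =
      Aset n (fun k => symbol p.1 k) (fun k => symbol p.2 k) ×ˢ
        (traceTransporter n (coordSpan K (symbol p.1)) p.1 ×ˢ
          traceTransporter n (coordSpan K (symbol p.2)) p.2) := by
  ext ⟨⟨⟨x, y⟩, hxy⟩, a, b⟩
  have htail : a ∈ traceTransporter n (coordSpan K x) p.1 →
      b ∈ traceTransporter n (coordSpan K y) p.2 →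
      ((∀ k, n ≤ k → truncDim (a • coordSpan K x) k = truncDim (b • coordSpan K y) k) ↔
        ∀ k, n ≤ k → x k = y k) := fun ha hb => by
    have hdim : truncDim (a • coordSpan K x) n = truncDim (b • coordSpan K y) n :=
      (truncDim_congr le_rfl ha).trans
        ((hp.2.2.2 n le_rfl).trans (truncDim_congr le_rfl hb).symm)
    rw [truncDim_eq_iff_symbol_eq hdim, Subgroup.smul_def, Subgroup.smul_def, symbol_smul a.2,
      symbol_smul b.2, symbol_coordSpan, symbol_coordSpan]
  constructor
  · rintro ⟨-, ha, hb, hdim⟩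
    have hxX := mem_traceTransporter_coordSpan_iff.mp ha
    have hyY := mem_traceTransporter_coordSpan_iff.mp hb
    exact ⟨⟨fun k => ⟨hxX.1 k k.2, hyY.1 k k.2⟩, (htail ha hb).mp hdim⟩, hxX.2, hyY.2⟩
  · rintro ⟨⟨hxy', htail'⟩, haX, hbY⟩
    have ha := mem_traceTransporter_coordSpan_iff.mpr ⟨fun k hk => (hxy' ⟨k, hk⟩).1, haX⟩
    have hb := mem_traceTransporter_coordSpan_iff.mpr ⟨fun k hk => (hxy' ⟨k, hk⟩).2, hbY⟩
    exact ⟨psiMap_mem_Gr2 _, ha, hb, (htail ha hb).mpr htail'⟩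

theorem measure_psiMap_preimage_Upair [Finite K] {μB : Measure (Bgrp K)} [SFinite μB]
    (hμB : ∀ (b : Bgrp K) (S : Set (Bgrp K)), MeasurableSet S → μB ((fun a => b * a) ⁻¹' S) = μB S)
    {w : ℕ → ℕ → ℝ≥0∞} {R : Measure ↥Tset}
    (hR : ∀ (n : ℕ) (c d : Fin n → Bool), trueCount c = trueCount d →
      R (Aset n c d) = w n (trueCount c))
    {n : ℕ} {p : Gr K × Gr K} (hp : p ∈ Upair K n p.1 p.2) :
    R.prod (μB.prod μB) (psiMap K ⁻¹' Upair K n p.1 p.2) *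
        (Nat.card K : ℝ≥0∞) ^ (symbolWeight p.1 n + symbolWeight p.2 n) =
      w n (truncDim p.1 n) *
        (μB Set.univ * (Nat.card K : ℝ≥0∞) ^ ∑ i ∈ Finset.range (truncDim p.1 n), (i + 1)) ^ 2 := by
  have hdim : truncDim p.2 n = truncDim p.1 n := (hp.2.2.2 n le_rfl).symm
  have hsymInc : ∀ (X : Gr K) (k : ℕ), symInc K (coordSpan K (symbol X)) k = symInc K X k :=
    fun X k => symbol_eq_iff.mp (congrFun (symbol_coordSpan _) k)
  have h₁ := measure_traceTransporter_mul_pow_symbolWeight hμB fun k (_ : k < n) => hsymInc p.1 k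
  have h₂ := measure_traceTransporter_mul_pow_symbolWeight hμB fun k (_ : k < n) => hsymInc p.2 k
  rw [hdim] at h₂
  rw [psiMap_preimage_Upair hp, Measure.prod_prod, Measure.prod_prod,
    hR n _ _ (by rw [trueCount_symbol, trueCount_symbol, hdim]), trueCount_symbol, pow_add, sq]
  nth_rewrite 1 [← h₁]
  rw [← h₂]
  ring

theorem symbolCocycle_congr {g : Vinf K ≃ₗ[K] Vinf K} {n : ℕ}
    (hg : ∀ m, n ≤ m → g • Vn K m = Vn K m) {X Y : Gr K} (h : X ⊓ Vn K n = Y ⊓ Vn K n) :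
    symbolCocycle g X = symbolCocycle g Y := by
  rw [symbolCocycle_eq_sub hg, symbolCocycle_eq_sub hg, symbolWeight_congr h,
    symbolWeight_congr ((smul_inf_Vn_eq_iff (hg n le_rfl)).mpr h)]

/-- The density `q^{∑_k k (Sym(X)_k - Sym(gX)_k) + ∑_k k (Sym(Y)_k - Sym(hY)_k)}` of the translate
of `ρ` by `(g, h)`. -/
noncomputable def cocycleDensity (g h : Vinf K ≃ₗ[K] Vinf K) (p : Gr K × Gr K) : ℝ≥0∞ :=
  ENNReal.ofReal ((Nat.card K : ℝ) ^ (symbolCocycle g p.1 + symbolCocycle h p.2))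

section Density

variable [Finite K] {ρ : Measure (Gr K × Gr K)} {C : ℕ → ℕ → ℝ≥0∞}

theorem measure_Upair_smul_eq_lintegral_cocycleDensity
    (hρ : ∀ (n : ℕ) (p : Gr K × Gr K), p ∈ Upair K n p.1 p.2 → ρ (Upair K n p.1 p.2) *
      (Nat.card K : ℝ≥0∞) ^ (symbolWeight p.1 n + symbolWeight p.2 n) = C n (truncDim p.1 n))
    {g h : Vinf K ≃ₗ[K] Vinf K} {n : ℕ}
    (hgh : ∀ m, n ≤ m → g • Vn K m = Vn K m ∧ h • Vn K m = Vn K m) {p : Gr K × Gr K}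
    (hp : p ∈ Upair K n p.1 p.2) :
    ρ (Upair K n (g • p.1) (h • p.2)) = ∫⁻ r in Upair K n p.1 p.2, cocycleDensity g h r ∂ρ := by
  have hg : ∀ m, n ≤ m → g • Vn K m = Vn K m := fun m hm => (hgh m hm).1
  have hh : ∀ m, n ≤ m → h • Vn K m = Vn K m := fun m hm => (hgh m hm).2
  have hconst : Set.EqOn (cocycleDensity g h) (fun _ => cocycleDensity g h p)
      (Upair K n p.1 p.2) := fun r hr => by
    rw [cocycleDensity, symbolCocycle_congr hg hr.2.1, symbolCocycle_congr hh hr.2.2.1,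
      cocycleDensity]
  have hvalue := hρ n (pairSMul g h p) ((pairSMul_mem_Upair_iff hgh).mpr hp)
  have hdim : truncDim (pairSMul g h p).1 n = truncDim p.1 n := truncDim_smul (hg n le_rfl) p.1
  rw [hdim] at hvalue
  rw [setLIntegral_congr_fun (measurableSet_Upair n p.1 p.2) hconst, setLIntegral_const,
    cocycleDensity, symbolCocycle_eq_sub hg, symbolCocycle_eq_sub hh, sub_add_sub_comm,
    ← Nat.cast_add, ← Nat.cast_add]
  exact eq_ofReal_zpow_sub_mul Nat.card_pos.ne' (hρ n p hp) hvalue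

theorem map_pairSMul_inv_eq_withDensity (hC : ∀ n d, C n d ≠ ∞) (hnull : ρ (Gr2 K)ᶜ = 0)
    (hρ : ∀ (n : ℕ) (p : Gr K × Gr K), p ∈ Upair K n p.1 p.2 → ρ (Upair K n p.1 p.2) *
      (Nat.card K : ℝ≥0∞) ^ (symbolWeight p.1 n + symbolWeight p.2 n) = C n (truncDim p.1 n))
    {g h : Vinf K ≃ₗ[K] Vinf K} (hg : g ∈ GLBgrp K) (hh : h ∈ GLBgrp K) :
    ρ.map (pairSMul g⁻¹ h⁻¹) = ρ.withDensity (cocycleDensity g h) := by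
  obtain ⟨N, hN⟩ := exists_forall_smul_Vn_eq hg hh
  have hmap : ∀ {A}, MeasurableSet A → ρ.map (pairSMul g⁻¹ h⁻¹) A = ρ (pairSMul g h '' A) :=
    fun hA => by
      rw [Measure.map_apply (measurable_pairSMul (inv_mem hg) (inv_mem hh)) hA,
        image_pairSMul_eq_preimage]
  have hfin : ∀ A ∈ basicSets K N, ρ A ≠ ∞ := by
    rintro _ ⟨n, -, p, hp, rfl⟩ htop
    have hvalue := hρ n p hp
    rw [htop, ENNReal.top_mul (pow_ne_zero _ (Nat.cast_ne_zero.mpr Nat.card_pos.ne'))] at hvalue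
    exact hC _ _ hvalue.symm
  refine measure_ext_of_basicSets N ?_ (withDensity_absolutelyContinuous _ _ hnull)
    (fun A hA => ?_) ?_
  · have hcompl : pairSMul g h '' (Gr2 K)ᶜ = (Gr2 K)ᶜ := by
      rw [image_pairSMul_eq_preimage]
      exact Set.ext fun p => not_congr (pairSMul_mem_Gr2_iff (inv_mem hg) (inv_mem hh))
    rw [hmap measurableSet_Gr2.compl, hcompl, hnull]
  · rw [hmap (measurableSet_of_mem_basicSets hA)]
    exact hfin _ (image_pairSMul_mem_basicSets hN hA)
  · rintro _ ⟨n, hn, p, hp, rfl⟩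
    have hgh : ∀ m, n ≤ m → g • Vn K m = Vn K m ∧ h • Vn K m = Vn K m :=
      fun m hm => hN m (hn.trans hm)
    rw [hmap (measurableSet_Upair n p.1 p.2), image_pairSMul_Upair hgh,
      withDensity_apply _ (measurableSet_Upair n p.1 p.2),
      measure_Upair_smul_eq_lintegral_cocycleDensity hρ hgh hp]

end Density

end QuasiInvariance

theorem rho_quasi_invariant_with_cocycle_general [Finite K]
    {μB : Measure (Bgrp K)} [IsFiniteMeasure μB]
    (hμB : ∀ (b : Bgrp K) (S : Set (Bgrp K)), MeasurableSet S → μB ((fun a => b * a) ⁻¹' S) = μB S)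
    {w : ℕ → ℕ → ℝ≥0∞} (hw : ∀ n k, w n k ≠ ∞) {R : Measure ↥Tset}
    (hR : ∀ (n : ℕ) (c d : Fin n → Bool), trueCount c = trueCount d →
      R (Aset n c d) = w n (trueCount c))
    {ρ : Measure (Gr K × Gr K)}
    (hρ : ∀ A, MeasurableSet A → ρ A = R.prod (μB.prod μB) (psiMap K ⁻¹' A)) :
    (∀ g ∈ GLBgrp K, ∀ X : Gr K, (Function.support fun k : ℕ =>
      ((k : ℤ) + 1) * ((symInc K X k : ℤ) - (symInc K (g • X) k : ℤ))).Finite) ∧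
    ∀ g h, g ∈ GLBgrp K → h ∈ GLBgrp K → ∀ A, MeasurableSet A →
      ρ (pairSMul g h '' A) = ∫⁻ p in A, cocycleDensity g h p ∂ρ := by
  refine ⟨fun g ⟨N, hg⟩ X => (Finset.range N).finite_toSet.subset
    (support_symbolCocycle_subset hg X), fun g h hg hh A hA => ?_⟩
  have hnull : ρ (Gr2 K)ᶜ = 0 := by
    have hempty : psiMap K ⁻¹' (Gr2 K)ᶜ = ∅ :=
      Set.eq_empty_of_forall_notMem fun w hw => hw (psiMap_mem_Gr2 w)
    rw [hρ _ measurableSet_Gr2.compl, hempty, measure_empty]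
  have hfin : ∀ n d, w n d * (μB Set.univ *
      (Nat.card K : ℝ≥0∞) ^ ∑ i ∈ Finset.range d, (i + 1)) ^ 2 ≠ ∞ := fun n d => by
    have hq : (Nat.card K : ℝ≥0∞) ≠ ∞ := ENNReal.natCast_ne_top _
    finiteness [hw n d]
  have hbasic : ∀ (n : ℕ) (p : Gr K × Gr K), p ∈ Upair K n p.1 p.2 → ρ (Upair K n p.1 p.2) *
      (Nat.card K : ℝ≥0∞) ^ (symbolWeight p.1 n + symbolWeight p.2 n) = _ := fun n p hp => by
    rw [hρ _ (measurableSet_Upair n p.1 p.2), measure_psiMap_preimage_Upair hμB hR hp]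
  rw [image_pairSMul_eq_preimage, ← Measure.map_apply
    (measurable_pairSMul (inv_mem hg) (inv_mem hh)) hA,
    map_pairSMul_inv_eq_withDensity hfin hnull hbasic hg hh, withDensity_apply _ hA]

/-- **Corollary 5.10** (quasi-invariance of `ρ_{t₁,t₂}` under `GLB × GLB`): with `R_{t₁,t₂}`
the measure on `T` determined by `R(A(i;j)) = t₁^{∑ i_k} t₂^{n-∑ i_k}`, `μB` the Haar
probability measure of `B`, and `ρ = ρ_{t₁,t₂}` the pushforward of `R ⊗ μB ⊗ μB` under `ψ`:
for all `g, h ∈ GLB` the cocycle exponents `∑_k k(Sym(X)_k - Sym(gX)_k)` and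
`∑_k k(Sym(Y)_k - Sym(hY)_k)` have finitely many nonzero terms, and for every measurable `A`,
`ρ((g,h)·A) = ∫_A q^{∑_k k(Sym(X)_k - Sym(gX)_k) + ∑_k k(Sym(Y)_k - Sym(hY)_k)} dρ(X,Y)`. -/
theorem rho_quasi_invariant_with_cocycle
    (t₁ t₂ : ℝ) (ht₁ : 0 ≤ t₁) (ht₂ : 0 ≤ t₂) (hsum : t₁ + t₂ = 1)
    (μB : Measure ↥(Bgrp F)) (hμBprob : IsProbabilityMeasure μB)
    (hμBinv : ∀ (b : ↥(Bgrp F)) (S : Set ↥(Bgrp F)), MeasurableSet S →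
      μB ((fun x => b * x) ⁻¹' S) = μB S)
    (R : Measure ↥Tset)
    (hR : ∀ (n : ℕ) (c d : Fin n → Bool), trueCount c = trueCount d →
      R (Aset n c d) = ENNReal.ofReal (t₁ ^ trueCount c * t₂ ^ (n - trueCount c)))
    (ρ : Measure (Submodule F (Vinf F) × Submodule F (Vinf F)))
    (hρ : ∀ A : Set (Submodule F (Vinf F) × Submodule F (Vinf F)), MeasurableSet A →
      ρ A = (R.prod (μB.prod μB)) (psiMap F ⁻¹' A)) :
    (∀ g : (Vinf F) ≃ₗ[F] (Vinf F), g ∈ GLBgrp F → ∀ X : Submodule F (Vinf F),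
      (Function.support (fun k : ℕ => ((k : ℤ) + 1) *
        ((symInc F X k : ℤ)
          - (symInc F (Submodule.map (g : (Vinf F) →ₗ[F] (Vinf F)) X) k : ℤ)))).Finite) ∧
    (∀ g h : (Vinf F) ≃ₗ[F] (Vinf F), g ∈ GLBgrp F → h ∈ GLBgrp F →
      ∀ A : Set (Submodule F (Vinf F) × Submodule F (Vinf F)), MeasurableSet A →
      ρ ((fun p : Submodule F (Vinf F) × Submodule F (Vinf F) =>
            (Submodule.map (g : (Vinf F) →ₗ[F] (Vinf F)) p.1,
             Submodule.map (h : (Vinf F) →ₗ[F] (Vinf F)) p.2)) '' A)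
        = ∫⁻ p in A, ENNReal.ofReal ((Fintype.card F : ℝ) ^
            ((∑ᶠ k : ℕ, ((k : ℤ) + 1) *
              ((symInc F p.1 k : ℤ)
                - (symInc F (Submodule.map (g : (Vinf F) →ₗ[F] (Vinf F)) p.1) k : ℤ)))
            + (∑ᶠ k : ℕ, ((k : ℤ) + 1) *
              ((symInc F p.2 k : ℤ)
                - (symInc F (Submodule.map (h : (Vinf F) →ₗ[F] (Vinf F)) p.2) k : ℤ))))) ∂ρ) := by
  simp only [← Nat.card_eq_fintype_card]
  exact rho_quasi_invariant_with_cocycle_general hμBinv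
    (w := fun n k => ENNReal.ofReal (t₁ ^ k * t₂ ^ (n - k)))
    (fun _ _ => ENNReal.ofReal_ne_top) hR hρ
end

section
/- Let p ∈ F_q[x] be a monic irreducible polynomial of degree k, let λ = (λ_1 ≥ λ_2 ≥ ... > 0) be a partition of m, and set n = km. Let g ∈ GL(n,q) be such that F_q^n, regarded as an F_q[x]-module with x acting as g, is isomorphic to ⊕_i F_q[x]/(p(x)^{λ_i}), and let y ∈ F_{q^k}^× and g' ∈ GL(m,q^k) be such that F_{q^k}^m, as an F_{q^k}[x]-module with x acting as g', is isomorphic to ⊕_i F_{q^k}[x]/((x−y)^{λ_i}). For a partition μ = (μ_1 ≥ ... ≥ μ_r > 0) of n, let ψ^q_μ(g) denote the number of flags V_1 ⊆ V_2 ⊆ ... ⊆ V_r of subspaces of F_q^n with dim V_j = μ_1 + ... + μ_j that are g-invariant (g·V_j = V_j for all j), and define ψ^{q^k}_ν(g') analogously for partitions ν of m and subspaces of F_{q^k}^m. Then ψ^q_μ(g) = ψ^{q^k}_ν(g') if μ_i = k·ν_i for all i for some partition ν of m, and ψ^q_μ(g) = 0 if μ is not of this form. (Identity (3.11), proved in Section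 3.2 via Proposition 3.7.) -/
/-!
STATEMENT 17: identity (3.11) of Section 3.2 — invariant-flag counts for a matrix whose
module structure is built from an irreducible polynomial `p` of degree `k` match invariant-flag
counts over the extension field `F_{q^k}`.
-/

variable (F : Type) [Field F] [Fintype F] [DecidableEq F]

/-- `ψ_μ(g)`: the number of `g`-invariant flags `V_1 ⊆ ... ⊆ V_r` of subspaces of `K^N` with
`dim V_j = μ_1 + ... + μ_j`. -/
noncomputable def flagCount (K : Type) [Field K] {N s : ℕ} (g : GL (Fin N) K)
    (μ : Fin s → ℕ) : ℕ :=
  Nat.card {W : Fin s → Submodule K (Fin N → K) //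
    (∀ j j' : Fin s, j ≤ j' → W j ≤ W j') ∧
    (∀ j : Fin s, Module.finrank K ↥(W j)
      = ∑ l ∈ Finset.univ.filter (fun l : Fin s => l ≤ j), μ l) ∧
    (∀ j : Fin s, Submodule.map (Matrix.mulVecLin (g : Matrix (Fin N) (Fin N) K)) (W j) = W j)}

/-!
Let `L / K` be generated by a root `α` of a separable irreducible polynomial `p`. Since `α` is a
simple root of `p`, the ideal `((X - y) ^ n)` of `L[X]` pulls back to `(p ^ n)` along the
homomorphism `θ : K[X] → L[X]`, `f(X) ↦ f(X + α - y)`. Both quotients have dimension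
`n * natDegree p` over `K`, so `θ` induces isomorphisms `K[X] / (p ^ n) ≃ L[X] / ((X - y) ^ n)`, and
the two modules attached to the partition are identified by a `θ`-semilinear bijection. Every
element of `L[X]` acts on the second one as an element of the image of `θ`, so both have the same
lattice of submodules, and dimensions over `K` are `[L : K]` times those over `L`.
-/

open Polynomial Function Module

section SemilinearMap

variable {R S : Type*} [Semiring R] [Semiring S] {σ : R →+* S}

/-- Pulling submodules back along a bijective semilinear map, as an isomorphism of lattices. The
ring homomorphism need not be surjective: it is enough that every scalar of the target acts as a
scalar in its image. -/
def comapOrderIso {M N : Type*} [AddCommMonoid M] [Module R M] [AddCommMonoid N] [Module S N]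
    (Ψ : M →ₛₗ[σ] N) (hΨ : Bijective Ψ) (hσ : ∀ b : S, ∃ a : R, ∀ x : N, σ a • x = b • x) :
    Submodule S N ≃o Submodule R M where
  toFun := Submodule.comap Ψ
  invFun W :=
    { W.toAddSubmonoid.map Ψ.toAddMonoidHom with
      smul_mem' := by
        rintro b _ ⟨v, hv, rfl⟩
        obtain ⟨a, ha⟩ := hσ b
        exact ⟨a • v, W.smul_mem a hv, (map_smulₛₗ Ψ a v).trans (ha _)⟩ }
  left_inv W := SetLike.coe_injective (Set.image_preimage_eq _ hΨ.surjective)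
  right_inv W := SetLike.coe_injective (Set.preimage_image_eq _ hΨ.injective)
  map_rel_iff' := hΨ.surjective.preimage_subset_preimage_iff

/-- The coordinatewise action of a family of semilinear maps: `LinearMap.piMap` over a ring
homomorphism. -/
def piMapSemilinear {ι : Type*} {M N : ι → Type*} [∀ i, AddCommMonoid (M i)] [∀ i, Module R (M i)]
    [∀ i, AddCommMonoid (N i)] [∀ i, Module S (N i)] (φ : ∀ i, M i →ₛₗ[σ] N i) :
    (∀ i, M i) →ₛₗ[σ] ∀ i, N i where
  toFun := Pi.map fun i => φ i
  map_add' v w := funext fun i => map_add (φ i) (v i) (w i)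
  map_smul' a v := funext fun i => map_smulₛₗ (φ i) a (v i)

end SemilinearMap

section Finrank

variable {K L : Type*} [Field K] [Field L] [Algebra K L]

theorem finrank_eq_mul_of_bijective_semilinear {V W : Type*} [AddCommGroup V] [Module K V]
    [AddCommGroup W] [Module L W] (φ : V →ₛₗ[algebraMap K L] W) (hφ : Bijective φ) :
    finrank K V = finrank K L * finrank L W := by
  let _ : Module K W := Module.compHom W (algebraMap K L)
  have : IsScalarTower K L W := .of_algebraMap_smul fun _ _ => rfl
  let φK : V →ₗ[K] W := { φ with map_smul' := map_smulₛₗ φ }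
  rw [(LinearEquiv.ofBijective φK hφ).finrank_eq, finrank_mul_finrank]

theorem finrank_comap_eq_mul {A B : Type*} [Ring A] [Algebra K A] [Ring B] [Algebra L B]
    [Algebra K B] [IsScalarTower K L B] {θ : A →ₐ[K] B}
    {M N : Type*} [AddCommGroup M] [Module K M] [Module A M] [IsScalarTower K A M]
    [AddCommGroup N] [Module L N] [Module B N] [IsScalarTower L B N]
    (Ψ : M →ₛₗ[(θ : A →+* B)] N) (hΨ : Bijective Ψ) (W : Submodule B N) :
    finrank K (W.comap Ψ) = finrank K L * finrank L W := by
  let ΨW : W.comap Ψ →ₛₗ[(θ : A →+* B)] W := Ψ.restrict fun _ hv => hv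
  refine finrank_eq_mul_of_bijective_semilinear
    { ΨW with
      map_smul' c v := show ΨW (c • v) = algebraMap K L c • ΨW v by
        rw [← algebraMap_smul A c v, map_smulₛₗ, AlgHom.coe_toRingHom, AlgHom.commutes,
          IsScalarTower.algebraMap_apply K L B, algebraMap_smul] }
    ⟨fun v w h => Subtype.ext (hΨ.injective (congrArg Subtype.val h)), fun w => ?_⟩
  obtain ⟨v, hv⟩ := hΨ.surjective w
  exact ⟨⟨v, show Ψ v ∈ W from hv ▸ w.2⟩, Subtype.ext hv⟩

end Finrank

theorem pow_dvd_map_iff {R S : Type*} [CommRing R] [IsBezout R] [CommRing S] [IsDomain S]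
    (θ : R →+* S) {p : R} (hp : Irreducible p) {q u : S} (hq : ¬IsUnit q) (hq0 : q ≠ 0)
    (hθ : θ p = q * u) (hqu : IsCoprime q u) (n : ℕ) (f : R) :
    q ^ n ∣ θ f ↔ p ^ n ∣ f := by
  refine ⟨fun h => ?_, fun ⟨h, hf⟩ => ?_⟩
  · induction n generalizing f with
    | zero => simp
    | succ n ih =>
      have hpf : p ∣ f := by
        by_contra hpf
        have hcop : IsCoprime (θ p) (θ f) := (hp.coprime_iff_not_dvd.2 hpf).map θ
        have hqf : q ∣ θ f := (dvd_pow_self q n.succ_ne_zero).trans h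
        exact hq (hcop.isUnit_of_dvd' (hθ ▸ dvd_mul_right q u) hqf)
      obtain ⟨f, rfl⟩ := hpf
      rw [map_mul, hθ, pow_succ', mul_assoc, mul_dvd_mul_iff_left hq0] at h
      rw [pow_succ']
      exact mul_dvd_mul_left p (ih f (hqu.pow_left.dvd_of_dvd_mul_left h))
  · rw [hf, map_mul, map_pow, hθ, mul_pow, mul_assoc]
    exact dvd_mul_right _ _

section TaylorBaseChange

variable {K L : Type*} [Field K] [Field L] [Algebra K L]

variable (K) in
/-- The homomorphism `f(X) ↦ f(X + r)` from polynomials over `K` to polynomials over an extension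
`L`. For `r = α - y` it moves a root `α` of `p` to `y`. -/
noncomputable def taylorBaseChange (r : L) : K[X] →ₐ[K] L[X] :=
  ((taylorAlgHom r).restrictScalars K).comp (mapAlgHom (Algebra.ofId K L))

variable {p : K[X]} {α : L}

theorem exists_taylorBaseChange_eq_mul (hsep : p.Separable) (hα : aeval α p = 0) (y : L) :
    ∃ u : L[X], taylorBaseChange K (α - y) p = (X - C y) * u ∧ IsCoprime (X - C y) u := by
  have hroot : X - C α ∣ p.map (algebraMap K L) := by
    rwa [dvd_iff_isRoot, IsRoot.def, eval_map_algebraMap]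
  obtain ⟨u, hu⟩ := hroot
  have hcop : IsCoprime (X - C α) u := (hu ▸ hsep.map (f := algebraMap K L)).isCoprime
  have hX : taylorAlgHom (α - y) (X - C α) = X - C y := by
    change taylor (α - y) (X - C α) = X - C y
    rw [map_sub, taylor_X, taylor_C, C_sub]
    ring
  refine ⟨taylorAlgHom (α - y) u, ?_, ?_⟩
  · rw [← hX, ← map_mul, ← hu]
    rfl
  · rw [← hX]
    exact hcop.map (taylorAlgHom (α - y)).toRingHom

theorem span_pow_eq_comap_taylorBaseChange (hirr : Irreducible p) (hsep : p.Separable)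
    (hα : aeval α p = 0) (y : L) (n : ℕ) :
    Ideal.span {p ^ n} = (Ideal.span {(X - C y) ^ n}).comap (taylorBaseChange K (α - y)) := by
  obtain ⟨u, hu, hcop⟩ := exists_taylorBaseChange_eq_mul hsep hα y
  ext f
  rw [Ideal.mem_comap, Ideal.mem_span_singleton, Ideal.mem_span_singleton]
  exact (pow_dvd_map_iff (taylorBaseChange K (α - y) : K[X] →+* L[X]) hirr (not_isUnit_X_sub_C y)
    (X_sub_C_ne_zero y) hu hcop n f).symm

theorem quotientMap_taylorBaseChange_bijective (hirr : Irreducible p) (hsep : p.Separable)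
    (hα : aeval α p = 0) (hdeg : finrank K L = p.natDegree) (y : L) (n : ℕ) :
    Bijective (Ideal.quotientMapₐ (Ideal.span {(X - C y) ^ n}) (taylorBaseChange K (α - y))
      (span_pow_eq_comap_taylorBaseChange hirr hsep hα y n).le) := by
  have hcomap := span_pow_eq_comap_taylorBaseChange hirr hsep hα y n
  let φ := Ideal.quotientMapₐ (Ideal.span {(X - C y) ^ n}) (taylorBaseChange K (α - y)) hcomap.le
  have hinj : Injective φ := Ideal.quotientMap_injective' (H := hcomap.le) hcomap.ge
  have hfinrank : finrank K (K[X] ⧸ Ideal.span {p ^ n}) =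
      finrank K (L[X] ⧸ Ideal.span {(X - C y) ^ n}) := by
    rw [← finrank_mul_finrank K L (L[X] ⧸ _), finrank_quotient_span_eq_natDegree,
      finrank_quotient_span_eq_natDegree, hdeg, natDegree_pow, natDegree_pow, natDegree_X_sub_C,
      mul_one, mul_comm]
  have : Module.Finite K L := finite_of_finrank_pos (hdeg ▸ hirr.natDegree_pos)
  have : Module.Finite L (L[X] ⧸ Ideal.span {(X - C y) ^ n}) :=
    ((monic_X_sub_C y).pow n).finite_quotient
  have : Module.Finite K (L[X] ⧸ Ideal.span {(X - C y) ^ n}) := .trans L _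
  have : Module.Finite K (K[X] ⧸ Ideal.span {p ^ n}) := .of_injective φ.toLinearMap hinj
  exact ⟨hinj, (LinearMap.injective_iff_surjective_of_finrank_eq_finrank
    (f := φ.toLinearMap) hfinrank).1 hinj⟩

theorem exists_taylorBaseChange_sub_mem (hirr : Irreducible p) (hsep : p.Separable)
    (hα : aeval α p = 0) (hdeg : finrank K L = p.natDegree) (y : L) (n : ℕ) (b : L[X]) :
    ∃ a : K[X], taylorBaseChange K (α - y) a - b ∈ Ideal.span {(X - C y) ^ n} := by
  obtain ⟨z, hz⟩ := (quotientMap_taylorBaseChange_bijective hirr hsep hα hdeg y n).surjective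
    (Ideal.Quotient.mk _ b)
  obtain ⟨a, rfl⟩ := Ideal.Quotient.mk_surjective z
  exact ⟨a, Ideal.Quotient.eq.1 hz⟩

end TaylorBaseChange

section PrimaryModule

variable {K L : Type*} [Field K] [Field L] [Algebra K L] {p : K[X]} {α : L} {ι : Type*}
  (lam : ι → ℕ)

theorem exists_taylorBaseChange_smul_eq [Finite ι] (hirr : Irreducible p) (hsep : p.Separable)
    (hα : aeval α p = 0) (hdeg : finrank K L = p.natDegree) (y : L) (b : L[X]) :
    ∃ a : K[X], ∀ v : ∀ i, L[X] ⧸ Ideal.span {(X - C y) ^ lam i},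
      taylorBaseChange K (α - y) a • v = b • v := by
  obtain ⟨n, hn⟩ := (Set.finite_range lam).bddAbove
  obtain ⟨a, ha⟩ := exists_taylorBaseChange_sub_mem hirr hsep hα hdeg y n b
  refine ⟨a, fun v => funext fun i => ?_⟩
  have hmem : taylorBaseChange K (α - y) a - b ∈ Ideal.span {(X - C y) ^ lam i} :=
    Ideal.span_singleton_le_span_singleton.2 (pow_dvd_pow _ (hn ⟨i, rfl⟩)) ha
  rw [← Ideal.annihilator_quotient (I := Ideal.span {(X - C y) ^ lam i})] at hmem
  rw [Pi.smul_apply, Pi.smul_apply, ← sub_eq_zero, ← sub_smul]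
  exact mem_annihilator.1 hmem (v i)

theorem exists_bijective_semilinearMap (hirr : Irreducible p) (hsep : p.Separable)
    (hα : aeval α p = 0) (hdeg : finrank K L = p.natDegree) (y : L) {M N : Type*}
    [AddCommGroup M] [Module K[X] M] [AddCommGroup N] [Module L[X] N]
    (eM : M ≃ₗ[K[X]] ∀ i, K[X] ⧸ Ideal.span {p ^ lam i})
    (eN : N ≃ₗ[L[X]] ∀ i, L[X] ⧸ Ideal.span {(X - C y) ^ lam i}) :
    ∃ Ψ : M →ₛₗ[(taylorBaseChange K (α - y) : K[X] →+* L[X])] N, Bijective Ψ := by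
  let θ : K[X] →+* L[X] := taylorBaseChange K (α - y)
  let φ (i : ι) : (K[X] ⧸ Ideal.span {p ^ lam i}) →ₛₗ[θ] L[X] ⧸ Ideal.span {(X - C y) ^ lam i} :=
    Submodule.mapQ _ _ θ.toSemilinearMap
      (span_pow_eq_comap_taylorBaseChange hirr hsep hα y (lam i)).le
  have hφ (i : ι) : Bijective (φ i) :=
    quotientMap_taylorBaseChange_bijective hirr hsep hα hdeg y (lam i)
  exact ⟨eN.symm.toLinearMap.comp ((piMapSemilinear φ).comp eM.toLinearMap),
    eN.symm.bijective.comp ((Bijective.piMap hφ).comp eM.bijective)⟩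

theorem finrank_mapSubmodule {V : Type*} [AddCommGroup V] [Module K V] (f : End K V)
    (W : f.invtSubmodule) : finrank K (AEval.mapSubmodule K V f W) = finrank K W.1 :=
  (AEval.equiv_mapSubmodule f W.1 W.2).finrank_eq.symm

theorem exists_orderIso_invtSubmodule [Finite ι] (hirr : Irreducible p) (hsep : p.Separable)
    (hα : aeval α p = 0) (hdeg : finrank K L = p.natDegree) (y : L)
    {V V' : Type*} [AddCommGroup V] [Module K V] [AddCommGroup V'] [Module L V']
    {f : End K V} {f' : End L V'}
    (ef : AEval' f ≃ₗ[K[X]] ∀ i, K[X] ⧸ Ideal.span {p ^ lam i})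
    (ef' : AEval' f' ≃ₗ[L[X]] ∀ i, L[X] ⧸ Ideal.span {(X - C y) ^ lam i}) :
    ∃ e : f.invtSubmodule ≃o f'.invtSubmodule,
      ∀ W, finrank K W.1 = p.natDegree * finrank L (e W).1 := by
  obtain ⟨Ψ, hΨ⟩ := exists_bijective_semilinearMap lam hirr hsep hα hdeg y ef ef'
  have hscalar (b : L[X]) :
      ∃ a : K[X], ∀ x : AEval' f', taylorBaseChange K (α - y) a • x = b • x := by
    obtain ⟨a, ha⟩ := exists_taylorBaseChange_smul_eq lam hirr hsep hα hdeg y b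
    exact ⟨a, fun x => ef'.injective (by rw [map_smul, map_smul, ha])⟩
  let e : f'.invtSubmodule ≃o f.invtSubmodule :=
    (AEval.mapSubmodule L V' f').trans
      ((comapOrderIso Ψ hΨ hscalar).trans (AEval.mapSubmodule K V f).symm)
  have hfinrank (W : f'.invtSubmodule) : finrank K (e W).1 = p.natDegree * finrank L W.1 :=
    calc finrank K (e W).1
      _ = finrank K ((AEval.mapSubmodule L V' f' W).comap Ψ) := by
        rw [← finrank_mapSubmodule]
        exact congrArg (fun N : Submodule K[X] (AEval' f) => finrank K N)
          ((AEval.mapSubmodule K V f).apply_symm_apply _)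
      _ = finrank K L * finrank L (AEval.mapSubmodule L V' f' W) := finrank_comap_eq_mul Ψ hΨ _
      _ = p.natDegree * finrank L W.1 := by
        rw [hdeg, finrank_mapSubmodule]
  exact ⟨e.symm, fun W => by rw [← hfinrank, e.apply_symm_apply]⟩

end PrimaryModule

section Flag

variable {K : Type*} [Field K] {s : ℕ}

/-- Flags of type `μ` of subspaces invariant under an endomorphism `f`: the objects counted by
`flagCount`, with members in the lattice `f.invtSubmodule`. -/
def InvariantFlag {V : Type*} [AddCommGroup V] [Module K V] (f : End K V)
    (μ : Fin s → ℕ) : Type _ :=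
  {W : Fin s → f.invtSubmodule //
    Monotone W ∧ ∀ j, finrank K (W j).1 = ∑ l ∈ Finset.Iic j, μ l}

theorem map_eq_iff_mem_invtSubmodule {V : Type*} [AddCommGroup V] [Module K V]
    [FiniteDimensional K V] {f : End K V} (hf : Injective f) (W : Submodule K V) :
    W.map f = W ↔ W ∈ f.invtSubmodule := by
  rw [End.mem_invtSubmodule_iff_map_le]
  exact ⟨le_of_eq, fun h => Submodule.eq_of_le_of_finrank_eq h
    (Submodule.equivMapOfInjective f hf W).finrank_eq.symm⟩

theorem flagCount_eq_card_invariantFlag {K : Type} [Field K] {N : ℕ} (g : GL (Fin N) K)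
    (μ : Fin s → ℕ) :
    flagCount K g μ = Nat.card (InvariantFlag (Matrix.mulVecLin g.1) μ) := by
  have hinv := map_eq_iff_mem_invtSubmodule (f := Matrix.mulVecLin g.1)
    (Matrix.mulVec_injective_of_isUnit g.isUnit)
  simp only [flagCount, Finset.filter_ge_eq_Iic]
  exact Nat.card_congr
    { toFun W := ⟨fun j => ⟨W.1 j, (hinv _).1 (W.2.2.2 j)⟩, W.2.1, W.2.2.1⟩
      invFun W := ⟨fun j => (W.1 j).1, W.2.1, W.2.2, fun j => (hinv _).2 (W.1 j).2⟩
      left_inv _ := rfl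
      right_inv _ := rfl }

theorem forall_dvd_of_forall_dvd_sum_Iic {ι : Type*} [LinearOrder ι] [LocallyFiniteOrderBot ι]
    [WellFoundedLT ι] {k : ℕ} {μ : ι → ℕ} (h : ∀ j, k ∣ ∑ l ∈ Finset.Iic j, μ l) (j : ι) :
    k ∣ μ j := by
  induction j using WellFoundedLT.induction with
  | ind j ih =>
    have hj := h j
    rw [Finset.Iic_eq_cons_Iio, Finset.sum_cons] at hj
    exact (Nat.dvd_add_left (Finset.dvd_sum fun l hl => ih l (Finset.mem_Iio.1 hl))).1 hj

variable {L V V' : Type*} [Field L] [AddCommGroup V] [Module K V] [AddCommGroup V'] [Module L V']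
  {f : End K V} {f' : End L V'} {k : ℕ}

/-- The bijection between the flags of type `k • ν` and those of type `ν` given by an isomorphism of
lattices of invariant subspaces that divides dimensions by `k`. -/
def invariantFlagEquiv (hk : k ≠ 0) (e : f.invtSubmodule ≃o f'.invtSubmodule)
    (he : ∀ W, finrank K W.1 = k * finrank L (e W).1) {μ ν : Fin s → ℕ} (hμ : ∀ j, μ j = k * ν j) :
    InvariantFlag f μ ≃ InvariantFlag f' ν :=
  (Equiv.piCongrRight fun _ => e.toEquiv).subtypeEquiv fun W => and_congr
    (forall₃_congr fun _ _ _ => e.le_iff_le.symm)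
    (forall_congr' fun j => by
      rw [he, Finset.sum_congr rfl fun l _ => hμ l, ← Finset.mul_sum, Nat.mul_right_inj hk]
      rfl)

theorem isEmpty_invariantFlag (hf : ∀ W ∈ f.invtSubmodule, k ∣ finrank K W) {μ : Fin s → ℕ}
    (hμ : ¬∀ j, k ∣ μ j) : IsEmpty (InvariantFlag f μ) :=
  ⟨fun W => hμ (forall_dvd_of_forall_dvd_sum_Iic fun j => W.2.2 j ▸ hf _ (W.1 j).2)⟩

end Flag

theorem exists_algebra_finrank_eq_and_aeval_eq_zero {K L : Type*} [Field K] [Fintype K] [Field L]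
    [Fintype L] {p : K[X]} (hirr : Irreducible p)
    (hcard : Fintype.card L = Fintype.card K ^ p.natDegree) :
    ∃ (_ : Algebra K L) (α : L), finrank K L = p.natDegree ∧ aeval α p = 0 := by
  have : Fact (Irreducible p) := ⟨hirr⟩
  have hfinrank : finrank K (AdjoinRoot p) = p.natDegree := finrank_quotient_span_eq_natDegree
  have : Module.Finite K (AdjoinRoot p) := finite_of_finrank_pos (hfinrank ▸ hirr.natDegree_pos)
  have : Finite (AdjoinRoot p) := Module.finite_of_finite K
  let _ := Fintype.ofFinite (AdjoinRoot p)
  let e : AdjoinRoot p ≃+* L := FiniteField.ringEquivOfCardEq <| by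
    rw [hcard, Module.card_eq_pow_finrank (K := K), hfinrank]
  let _ : Algebra K L := (e.toRingHom.comp (AdjoinRoot.of p)).toAlgebra
  let eK : AdjoinRoot p ≃ₐ[K] L := .ofRingEquiv (f := e) fun _ => rfl
  refine ⟨inferInstance, eK (AdjoinRoot.root p), ?_, ?_⟩
  · rw [← eK.toLinearEquiv.finrank_eq, hfinrank]
  · rw [aeval_algHom_apply eK, AdjoinRoot.aeval_eq, AdjoinRoot.mk_self, map_zero]

/-- Where there are infinitely many flags both counts are the junk value `0` of `Nat.card`, but the
flags still correspond under `invariantFlagEquiv`. -/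
theorem flag_count_field_extension_general {K L : Type} [Field K] [Field L] [Algebra K L]
    {p : K[X]} (hirr : Irreducible p) (hsep : p.Separable) {α : L} (hα : aeval α p = 0)
    (hdeg : finrank K L = p.natDegree) {ι : Type*} [Finite ι] (lam : ι → ℕ) {n m : ℕ}
    (g : GL (Fin n) K)
    (hg : Nonempty (AEval' (Matrix.mulVecLin (g : Matrix (Fin n) (Fin n) K)) ≃ₗ[K[X]]
      ∀ i, K[X] ⧸ Ideal.span {p ^ lam i}))
    (y : L) (g' : GL (Fin m) L)
    (hg' : Nonempty (AEval' (Matrix.mulVecLin (g' : Matrix (Fin m) (Fin m) L)) ≃ₗ[L[X]]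
      ∀ i, L[X] ⧸ Ideal.span {(X - C y) ^ lam i}))
    {s : ℕ} (μ : Fin s → ℕ) :
    (∀ ν : Fin s → ℕ, (∀ j, μ j = p.natDegree * ν j) → flagCount K g μ = flagCount L g' ν) ∧
    ((¬∀ j, p.natDegree ∣ μ j) → flagCount K g μ = 0) := by
  obtain ⟨eg⟩ := hg
  obtain ⟨eg'⟩ := hg'
  obtain ⟨e, he⟩ := exists_orderIso_invtSubmodule lam hirr hsep hα hdeg y eg eg'
  simp only [flagCount_eq_card_invariantFlag]
  refine ⟨fun ν hν => Nat.card_congr (invariantFlagEquiv hirr.natDegree_pos.ne' e he hν),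
    fun hμ => ?_⟩
  have := isEmpty_invariantFlag (fun W hW => Dvd.intro _ (he ⟨W, hW⟩).symm) hμ
  exact Nat.card_of_isEmpty

/-- **Identity (3.11)**: let `p` be monic irreducible of degree `k` over `F_q`, `λ ⊢ m`, and
let `g ∈ GL(km, q)` have `F_q[x]`-module type `⊕_i F_q[x]/(p^{λ_i})`, while
`g' ∈ GL(m, q^k)` has `F_{q^k}[x]`-module type `⊕_i F_{q^k}[x]/((x-y)^{λ_i})`. Then for a
partition `μ` of `km`: `ψ^q_μ(g) = ψ^{q^k}_ν(g')` whenever `μ = k·ν`, and `ψ^q_μ(g) = 0` if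
`μ` is not of this form. -/
theorem flag_count_field_extension
    (k m : ℕ) (hk : 1 ≤ k) (hm : 1 ≤ m)
    (p : Polynomial F) (hmonic : p.Monic) (hirr : Irreducible p) (hdeg : p.natDegree = k)
    {r : ℕ} (lam : Fin r → ℕ) (hanti : Antitone lam) (hpos : ∀ i, 0 < lam i)
    (hsum : ∑ i, lam i = m)
    (g : GL (Fin (k * m)) F)
    (hg : Nonempty
      ((Module.AEval' (Matrix.mulVecLin (g : Matrix (Fin (k * m)) (Fin (k * m)) F)))
        ≃ₗ[Polynomial F] ∀ i : Fin r, Polynomial F ⧸ Ideal.span {p ^ lam i}))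
    (E : Type) [Field E] [Fintype E] [DecidableEq E]
    (hE : Fintype.card E = (Fintype.card F) ^ k)
    (y : E) (hy : y ≠ 0)
    (g' : GL (Fin m) E)
    (hg' : Nonempty
      ((Module.AEval' (Matrix.mulVecLin (g' : Matrix (Fin m) (Fin m) E)))
        ≃ₗ[Polynomial E] ∀ i : Fin r,
          Polynomial E ⧸ Ideal.span {(Polynomial.X - Polynomial.C y) ^ lam i}))
    {s : ℕ} (μ : Fin s → ℕ) (hμanti : Antitone μ) (hμpos : ∀ j, 0 < μ j)
    (hμsum : ∑ j, μ j = k * m) :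
    (∀ ν : Fin s → ℕ, (∀ j, μ j = k * ν j) → flagCount F g μ = flagCount E g' ν) ∧
    ((¬ ∀ j : Fin s, k ∣ μ j) → flagCount F g μ = 0) := by
  subst hdeg
  obtain ⟨_, α, hdeg, hα⟩ := exists_algebra_finrank_eq_and_aeval_eq_zero hirr hE
  exact flag_count_field_extension_general hirr (PerfectField.separable_of_irreducible hirr) hα hdeg
    lam g hg y g' hg' μ
end

section
/- For integers n ≥ 1 and 1 ≤ r ≤ n−1, let N_{n,r}(m) denote the number of subsets S ⊆ {1,...,n} with |S| = r and Σ_{k∈S} k = m. Then max_m N_{n,r}(m) / C(n,r) tends to 0 as n → ∞ uniformly in r: for every ε > 0 there exists N such that for all n ≥ N, all r with 1 ≤ r ≤ n−1, and all integers m, one has N_{n,r}(m) ≤ ε·C(n,r), where C(n,r) = n!/(r!(n−r)!) = Σ_m N_{n,r}(m). (The uniform bound (5.4)–(5.5) established and used in the proof of Proposition 5.8.) -/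
/-!
STATEMENT 18: the uniform bound (5.4)–(5.5) used in the proof of Proposition 5.8.
-/

/-- `N_{n,r}(m)`: the number of subsets `S ⊆ {1,...,n}` with `|S| = r` and `∑_{k ∈ S} k = m`. -/
def subsetSumCount (n r m : ℕ) : ℕ :=
  ((Finset.Icc 1 n).powerset.filter (fun S => S.card = r ∧ S.sum id = m)).card

/-!
Let the elements of an `n`-set `s` carry distinct weights, and adjoin to an `r`-subset `t` of total
weight `m` an element `i ∉ t`. The resulting `(r + 1)`-set `u` determines the weight of `i`, which
is the total weight of `u` minus `m`, hence it determines `i` and `t`. So the number `N` of such `t`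
satisfies `N * (n - r) ≤ C(n, r + 1)`. Deleting an element of `t` instead gives
`N * r ≤ C(n, r - 1)`. For `0 < r < n` these read `N * (r + 1) ≤ C(n, r)` and
`N * (n - r + 1) ≤ C(n, r)`, so `N * (n + 2) ≤ 2 * C(n, r)`.
-/

open Finset

section SubsetsWithSum

variable {ι M : Type*} [AddCancelCommMonoid M]
  {s t u : Finset ι} {f : ι → M} {r : ℕ} {m : M} {i j : ι}

lemma eq_of_insert_eq_insert_of_sum_eq [DecidableEq ι] (hf : Set.InjOn f s) (hi : i ∈ s \ t)
    (hj : j ∈ s \ u) (hsum : ∑ k ∈ t, f k = ∑ k ∈ u, f k) (h : insert i t = insert j u) :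
    t = u ∧ i = j := by
  rw [mem_sdiff] at hi hj
  have hij : i = j := by
    refine hf hi.1 hj.1 (add_right_cancel (b := ∑ k ∈ u, f k) ?_)
    rw [← sum_insert hj.2, ← h, sum_insert hi.2, hsum]
  subst hij
  exact ⟨by rw [← erase_insert hi.2, h, erase_insert hj.2], rfl⟩

lemma eq_of_erase_eq_erase_of_sum_eq [DecidableEq ι] (hf : Set.InjOn f s) (ht : t ⊆ s)
    (hu : u ⊆ s) (hi : i ∈ t) (hj : j ∈ u) (hsum : ∑ k ∈ t, f k = ∑ k ∈ u, f k)
    (h : t.erase i = u.erase j) : t = u ∧ i = j := by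
  have hij : i = j := by
    refine hf (ht hi) (hu hj) (add_right_cancel (b := ∑ k ∈ u.erase j, f k) ?_)
    rw [add_sum_erase u f hj, ← h, add_sum_erase t f hi, hsum]
  subst hij
  exact ⟨by rw [← insert_erase hi, h, insert_erase hj], rfl⟩

variable [DecidableEq M]

/-- The `r`-element subsets of `s` whose elements have total weight `m` for the weight function
`f`; for `s = {1, ..., n}` and `f = id` they are counted by `subsetSumCount n r m`. -/
def subsetsWithSum (s : Finset ι) (f : ι → M) (r : ℕ) (m : M) : Finset (Finset ι) :=
  {t ∈ s.powersetCard r | ∑ i ∈ t, f i = m}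

lemma mem_subsetsWithSum :
    t ∈ subsetsWithSum s f r m ↔ t ⊆ s ∧ #t = r ∧ ∑ i ∈ t, f i = m := by
  rw [subsetsWithSum, mem_filter, mem_powersetCard, and_assoc]

lemma card_subsetsWithSum_mul_card_sub_le (hf : Set.InjOn f s) :
    #(subsetsWithSum s f r m) * (#s - r) ≤ (#s).choose (r + 1) := by
  classical
  calc #(subsetsWithSum s f r m) * (#s - r)
      = #((subsetsWithSum s f r m).sigma fun t ↦ s \ t) := by
        rw [card_sigma, sum_const_nat]
        intro t ht
        obtain ⟨hts, htr, -⟩ := mem_subsetsWithSum.1 ht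
        rw [card_sdiff_of_subset hts, htr]
    _ ≤ #(s.powersetCard (r + 1)) := by
        refine card_le_card_of_injOn (fun p ↦ insert p.2 p.1) ?_ ?_
        · rintro ⟨t, i⟩ hp
          obtain ⟨ht, hi⟩ := mem_sigma.1 hp
          obtain ⟨hts, htr, -⟩ := mem_subsetsWithSum.1 ht
          obtain ⟨his, hit⟩ := mem_sdiff.1 hi
          exact mem_powersetCard.2
            ⟨insert_subset his hts, by rw [card_insert_of_notMem hit, htr]⟩
        · rintro ⟨t, i⟩ hp ⟨u, j⟩ hq h
          obtain ⟨ht, hi⟩ := mem_sigma.1 hp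
          obtain ⟨hu, hj⟩ := mem_sigma.1 hq
          obtain ⟨-, -, htm⟩ := mem_subsetsWithSum.1 ht
          obtain ⟨-, -, hum⟩ := mem_subsetsWithSum.1 hu
          obtain ⟨rfl, rfl⟩ := eq_of_insert_eq_insert_of_sum_eq hf hi hj (htm.trans hum.symm) h
          rfl
    _ = (#s).choose (r + 1) := card_powersetCard _ _

lemma card_subsetsWithSum_mul_le (hf : Set.InjOn f s) :
    #(subsetsWithSum s f r m) * r ≤ (#s).choose (r - 1) := by
  classical
  calc #(subsetsWithSum s f r m) * r
      = #((subsetsWithSum s f r m).sigma fun t ↦ t) := by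
        rw [card_sigma, sum_const_nat fun t ht ↦ (mem_subsetsWithSum.1 ht).2.1]
    _ ≤ #(s.powersetCard (r - 1)) := by
        refine card_le_card_of_injOn (fun p ↦ p.1.erase p.2) ?_ ?_
        · rintro ⟨t, i⟩ hp
          obtain ⟨ht, hi⟩ := mem_sigma.1 hp
          obtain ⟨hts, htr, -⟩ := mem_subsetsWithSum.1 ht
          exact mem_powersetCard.2
            ⟨(erase_subset i t).trans hts, (card_erase_of_mem hi).trans (congrArg (· - 1) htr)⟩
        · rintro ⟨t, i⟩ hp ⟨u, j⟩ hq h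
          obtain ⟨ht, hi⟩ := mem_sigma.1 hp
          obtain ⟨hu, hj⟩ := mem_sigma.1 hq
          obtain ⟨hts, -, htm⟩ := mem_subsetsWithSum.1 ht
          obtain ⟨hus, -, hum⟩ := mem_subsetsWithSum.1 hu
          obtain ⟨rfl, rfl⟩ :=
            eq_of_erase_eq_erase_of_sum_eq hf hts hus hi hj (htm.trans hum.symm) h
          rfl
    _ = (#s).choose (r - 1) := card_powersetCard _ _

lemma card_subsetsWithSum_mul_succ_le_choose (hf : Set.InjOn f s) (hr : r < #s) :
    #(subsetsWithSum s f r m) * (r + 1) ≤ (#s).choose r := by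
  refine Nat.le_of_mul_le_mul_right ?_ (Nat.sub_pos_of_lt hr)
  calc #(subsetsWithSum s f r m) * (r + 1) * (#s - r)
      = #(subsetsWithSum s f r m) * (#s - r) * (r + 1) := mul_right_comm _ _ _
    _ ≤ (#s).choose (r + 1) * (r + 1) := by
        gcongr
        exact card_subsetsWithSum_mul_card_sub_le hf
    _ = (#s).choose r * (#s - r) := Nat.choose_succ_right_eq _ _

lemma card_subsetsWithSum_mul_card_sub_succ_le_choose (hf : Set.InjOn f s) (hr : r ≠ 0) :
    #(subsetsWithSum s f r m) * (#s - (r - 1)) ≤ (#s).choose r := by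
  refine Nat.le_of_mul_le_mul_right ?_ (Nat.pos_of_ne_zero hr)
  calc #(subsetsWithSum s f r m) * (#s - (r - 1)) * r
      = #(subsetsWithSum s f r m) * r * (#s - (r - 1)) := mul_right_comm _ _ _
    _ ≤ (#s).choose (r - 1) * (#s - (r - 1)) := by
        gcongr
        exact card_subsetsWithSum_mul_le hf
    _ = (#s).choose r * r := by
        rw [← Nat.choose_succ_right_eq, Nat.sub_one_add_one hr]

lemma card_subsetsWithSum_mul_card_add_two_le (hf : Set.InjOn f s) (hr : r ≠ 0) (hrs : r < #s) :
    #(subsetsWithSum s f r m) * (#s + 2) ≤ 2 * (#s).choose r := by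
  have hsplit : #s + 2 = (r + 1) + (#s - (r - 1)) := by lia
  rw [hsplit, mul_add, two_mul]
  exact add_le_add (card_subsetsWithSum_mul_succ_le_choose hf hrs)
    (card_subsetsWithSum_mul_card_sub_succ_le_choose hf hr)

theorem subsetSumCount_uniformly_small_general {ε : ℝ} (hε : 0 < ε) :
    ∃ N : ℕ, ∀ (s : Finset ι) (f : ι → M), Set.InjOn f s → N ≤ #s →
      ∀ r : ℕ, r ≠ 0 → r < #s → ∀ m : M,
        (#(subsetsWithSum s f r m) : ℝ) ≤ ε * ((#s).choose r : ℝ) := by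
  obtain ⟨N, hN⟩ := exists_nat_ge (2 / ε)
  refine ⟨N, fun s f hf hNs r hr hrs m ↦ ?_⟩
  have hcard : 2 ≤ ε * (#s + 2 : ℝ) := by
    rw [← div_le_iff₀' hε]
    have : (N : ℝ) ≤ #s := by exact_mod_cast hNs
    linarith
  have hbound : (#(subsetsWithSum s f r m) : ℝ) * (#s + 2) ≤ 2 * ((#s).choose r : ℝ) := by
    exact_mod_cast card_subsetsWithSum_mul_card_add_two_le hf hr hrs
  refine le_of_mul_le_mul_right ?_ (by positivity : (0 : ℝ) < #s + 2)
  calc (#(subsetsWithSum s f r m) : ℝ) * (#s + 2)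
      ≤ 2 * ((#s).choose r : ℝ) := hbound
    _ ≤ ε * (#s + 2) * ((#s).choose r : ℝ) := by gcongr
    _ = ε * ((#s).choose r : ℝ) * (#s + 2) := mul_right_comm _ _ _

end SubsetsWithSum

lemma subsetSumCount_eq_card_subsetsWithSum (n r m : ℕ) :
    subsetSumCount n r m = #(subsetsWithSum (Icc 1 n) id r m) := by
  rw [subsetSumCount, subsetsWithSum, powersetCard_eq_filter, filter_filter]

/-- **The uniform bound (5.4)–(5.5)**: `max_m N_{n,r}(m) / C(n,r)` tends to `0` as `n → ∞`
uniformly in `r` with `1 ≤ r ≤ n-1`. -/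
theorem subsetSumCount_uniformly_small :
    ∀ ε : ℝ, 0 < ε → ∃ N : ℕ, ∀ n : ℕ, N ≤ n → ∀ r : ℕ, 1 ≤ r → r ≤ n - 1 → ∀ m : ℕ,
      (subsetSumCount n r m : ℝ) ≤ ε * (Nat.choose n r : ℝ) := by
  intro ε hε
  obtain ⟨N, hN⟩ := subsetSumCount_uniformly_small_general (ι := ℕ) (M := ℕ) hε
  refine ⟨N, fun n hn r hr hrn m ↦ ?_⟩
  simpa only [subsetSumCount_eq_card_subsetsWithSum, Nat.card_Icc, Nat.add_sub_cancel] using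
    hN (Icc 1 n) id Function.injective_id.injOn (by simpa) r (by lia) (by rw [Nat.card_Icc]; lia) m
end
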